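/- Let α ∈ Δ' and let v ∈ DF(I(α)). Suppose that it is not the case that all three of the following hold: v ∉ ℚ³, v₂ > 0, and I(v) = I(α). Then v is represented by a v-goober in B(I(α)): there exist a minimal set Y for σ with Y ⊆ B(I(α)) and a constant M > 0 such that ‖κ_σ(s,r) − r·v‖ < M for all s ∈ Y and all r ∈ ℕ; in particular, every point of Y has Birkhoff digit frequency v. -/

import Mathlib

open Filter Topology MeasureTheory

/-- The sequence space `Σ⁺ = {0,1,2}^ℕ` (with the product topology). -/
abbrev Seq3 := ℕ → Fin 3

/-- The shift map `σ`. -/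
def shift (s : Seq3) : Seq3 := fun n => s (n + 1)

/-- The observable `κ(s) = e_{s₀}`. -/
noncomputable def kappa (s : Seq3) : Fin 3 → ℝ := fun i => if i = s 0 then 1 else 0

/-- The cocycle `κ_σ(s,r) = Σ_{i<r} κ(σⁱ s)`. -/
noncomputable def birk (s : Seq3) (r : ℕ) : Fin 3 → ℝ :=
  ∑ i ∈ Finset.range r, kappa (shift^[i] s)

/-- The Birkhoff digit frequency of `s` exists and equals `v`. -/
def hasFreq (s : Seq3) (v : Fin 3 → ℝ) : Prop :=
  Tendsto (fun r : ℕ => (r : ℝ)⁻¹ • birk s r) atTop (nhds v)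

/-- The lexicographic order on `Σ⁺`. -/
def lexLe (s t : Seq3) : Prop :=
  s = t ∨ ∃ n, (∀ i, i < n → s i = t i) ∧ s n < t n

/-- The set `Max` of maximal sequences. -/
def MaxSet : Set Seq3 := {w | w 0 = 2 ∧ ∀ r : ℕ, lexLe (shift^[r] w) w}

/-- The symbolic β-shift `B(w)`. -/
def BetaShift (w : Seq3) : Set Seq3 := {s | ∀ r : ℕ, lexLe (shift^[r] s) w}

/-- The digit frequency set `DF(w)`. -/
def DF (w : Seq3) : Set (Fin 3 → ℝ) := {v | ∃ s ∈ BetaShift w, hasFreq s v}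

/-- The Misiurewicz–Ziemian digit frequency set `DF_MZ(X)` of a subset `X ⊆ Σ⁺`. -/
def DFMZ (X : Set Seq3) : Set (Fin 3 → ℝ) :=
  {v | ∃ (s : ℕ → Seq3) (r : ℕ → ℕ), (∀ i, s i ∈ X) ∧ Tendsto r atTop atTop ∧
    Tendsto (fun i => (r i : ℝ)⁻¹ • birk (s i) (r i)) atTop (nhds v)}

/-- The standard 2-simplex `Δ ⊆ ℝ³`. -/
def Delta : Set (Fin 3 → ℝ) := {α | (∀ i, 0 ≤ α i) ∧ α 0 + α 1 + α 2 = 1}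

/-- `Δ' = {α ∈ Δ : α₂ > 0}`. -/
def Delta' : Set (Fin 3 → ℝ) := {α | α ∈ Delta ∧ 0 < α 2}

/-- `I` is the infimax sequence of `α`: the infimum, in the lexicographic order, of the
(nonempty) set of maximal sequences with digit frequency `α`; it belongs to `Max`. -/
def IsInfimax (α : Fin 3 → ℝ) (I : Seq3) : Prop :=
  {w | w ∈ MaxSet ∧ hasFreq w α}.Nonempty ∧ I ∈ MaxSet ∧
    (∀ w, w ∈ MaxSet ∧ hasFreq w α → lexLe I w) ∧
    (∀ b : Seq3, (∀ w, w ∈ MaxSet ∧ hasFreq w α → lexLe b w) → lexLe b I)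

/-- The closure of the forward `σ`-orbit of `s` (e.g. `C_α` is `orbitClosure I(α)`). -/
def orbitClosure (s : Seq3) : Set Seq3 := closure {t | ∃ r : ℕ, shift^[r] s = t}

/-- A vector in `ℝ³` is rational if all its coordinates are. -/
def IsRat (v : Fin 3 → ℝ) : Prop := ∀ i, ∃ q : ℚ, v i = (q : ℝ)

/-- A minimal set of a continuous map: a nonempty compact invariant set in which every
point has dense forward orbit. -/
def IsMinimalSet {X : Type*} [TopologicalSpace X] (f : X → X) (C : Set X) : Prop :=
  C.Nonempty ∧ IsCompact C ∧ Set.MapsTo f C C ∧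
    ∀ x ∈ C, C ⊆ closure {y | ∃ n : ℕ, f^[n] x = y}

/-!
A subtractive continued fraction algorithm on digit frequencies records, for each `v`, a sequence of
substitutions chosen among `0 ↦ 0, 1 ↦ 1, 2 ↦ 20` and `0 ↦ 1, 1 ↦ 20, 2 ↦ 2`, its itinerary. Both
substitutions preserve the lexicographic order, and a sequence with frequency `v` can be
desubstituted along the itinerary of `v`: every shift of the result, substituted back, lies below a
shift of the original one. In the case `v 0 < v 2` this works by reading `2` and `0` as opening and
closing brackets and deleting the closing ones. Hence the infimax sequence of `α` lies, for every
`k`, between the images of `2000…` and of `222…` under the first `k` substitutions of `α`.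

Let `v` be a frequency realized below the infimax sequence of `α`. If the itineraries differ, then
at the first difference `v` takes the smaller substitution, which leaves room for a greedy sequence
of bounded deviation. If they agree and are eventually `true`, then `v` is realized by an image of
`222…`. If they agree and are `false` infinitely often, then the bounds above collapse to a single
sequence, the infimax sequence of `v`, while `v` is irrational because rational vectors have
eventually `true` itineraries; this is the excluded case.
-/

/-! ### The shift and the lexicographic order -/

theorem iterate_shift_apply (s : Seq3) (r n : ℕ) : shift^[r] s n = s (n + r) := by
  induction r generalizing s with
  | zero => rfl
  | succ r ih => rw [Function.iterate_succ_apply, ih, shift, add_assoc]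

theorem iterate_shift_apply_zero (s : Seq3) (r : ℕ) : shift^[r] s 0 = s r := by
  rw [iterate_shift_apply, zero_add]

theorem iterate_shift_apply_one (s : Seq3) (r : ℕ) : shift^[r] s 1 = s (r + 1) := by
  rw [iterate_shift_apply, add_comm]

theorem shift_iterate_shift (s : Seq3) (r : ℕ) : shift (shift^[r] s) = shift^[r + 1] s :=
  (Function.iterate_succ_apply' shift r s).symm

theorem iterate_shift_iterate_shift (s : Seq3) (m n : ℕ) :
    shift^[m] (shift^[n] s) = shift^[m + n] s :=
  (Function.iterate_add_apply shift m n s).symm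

/-- The strict lexicographic order on `Σ⁺`. -/
def lexLt (s t : Seq3) : Prop := ∃ n, (∀ i, i < n → s i = t i) ∧ s n < t n

theorem lexLe_iff_toLex_le {s t : Seq3} : lexLe s t ↔ toLex s ≤ toLex t :=
  (le_iff_eq_or_lt (a := toLex s) (b := toLex t)).symm

theorem not_lexLt {s t : Seq3} : ¬ lexLt s t ↔ lexLe t s :=
  (not_lt (a := toLex s) (b := toLex t)).trans lexLe_iff_toLex_le.symm

theorem lexLe.refl (s : Seq3) : lexLe s s := Or.inl rfl

theorem lexLe.trans {a b c : Seq3} (hab : lexLe a b) (hbc : lexLe b c) : lexLe a c :=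
  lexLe_iff_toLex_le.2 ((lexLe_iff_toLex_le.1 hab).trans (lexLe_iff_toLex_le.1 hbc))

theorem lexLe.not_lexLt {a b : Seq3} (h : lexLe a b) : ¬ lexLt b a := _root_.not_lexLt.2 h

theorem lexLt.lexLe {a b : Seq3} (h : lexLt a b) : lexLe a b := Or.inr h

theorem lexLt_of_head_lt {a b : Seq3} (h : a 0 < b 0) : lexLt a b :=
  ⟨0, fun i hi => absurd hi i.not_lt_zero, h⟩

theorem lexLt_of_lt_at_one {a b : Seq3} (h₀ : a 0 = b 0) (h₁ : a 1 < b 1) : lexLt a b :=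
  ⟨1, fun i hi => by rwa [Nat.lt_one_iff.1 hi], h₁⟩

theorem lexLt_of_lexLt_iterate_shift {a b : Seq3} {r : ℕ} (hab : a ∈ PiNat.cylinder b r)
    (h : lexLt (shift^[r] a) (shift^[r] b)) : lexLt a b := by
  obtain ⟨n, heq, hlt⟩ := h
  simp only [iterate_shift_apply] at heq hlt
  refine ⟨n + r, fun i hi => ?_, hlt⟩
  rcases lt_or_ge i r with hir | hri
  · exact hab i hir
  · simpa only [Nat.sub_add_cancel hri] using heq (i - r) (by omega)

theorem lexLe_of_forall_cylinder {a b : Seq3}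
    (h : ∀ n, ∃ a' ∈ PiNat.cylinder a n, ∃ b' ∈ PiNat.cylinder b n, lexLe a' b') :
    lexLe a b := by
  refine not_lexLt.1 fun ⟨n, heq, hlt⟩ => ?_
  obtain ⟨a', ha, b', hb, hab⟩ := h (n + 1)
  refine hab.not_lexLt ⟨n, fun i hi => ?_, ?_⟩
  · rw [ha i (by omega), hb i (by omega), heq i hi]
  · rwa [ha n n.lt_succ_self, hb n n.lt_succ_self]

theorem mem_cylinder_of_lexLe_of_lexLe {a b c : Seq3} {n : ℕ} (hca : c ∈ PiNat.cylinder a n)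
    (hab : lexLe a b) (hbc : lexLe b c) : b ∈ PiNat.cylinder a n := by
  intro i
  induction i using Nat.strong_induction_on with
  | _ i ih =>
    intro hi
    rcases lt_trichotomy (b i) (a i) with hlt | heq | hgt
    · exact absurd ⟨i, fun j hj => ih j hj (hj.trans hi), hlt⟩ hab.not_lexLt
    · exact heq
    · refine absurd ⟨i, fun j hj => ?_, ?_⟩ hbc.not_lexLt
      · rw [ih j hj (hj.trans hi), hca j (hj.trans hi)]
      · rwa [hca i hi]

theorem lexLe_of_bisimulation (R : Seq3 → Seq3 → Prop)
    (hR : ∀ a b, R a b →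
      lexLe a b ∨ ∃ k, 0 < k ∧ a ∈ PiNat.cylinder b k ∧ R (shift^[k] a) (shift^[k] b))
    {a b : Seq3} (h : R a b) : lexLe a b := by
  rw [← not_lexLt]
  rintro ⟨n, heq, hlt⟩
  induction n using Nat.strong_induction_on generalizing a b with
  | _ n ih =>
    rcases hR a b h with hle | ⟨k, hk, hag, hR'⟩
    · exact hle.not_lexLt ⟨n, heq, hlt⟩
    · rcases lt_or_ge n k with hnk | hkn
      · exact hlt.ne (hag n hnk).symm
      · refine ih (n - k) (by omega) hR' (fun i hi => ?_) ?_
        · simpa only [iterate_shift_apply] using heq (i + k) (by omega)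
        · simpa only [iterate_shift_apply, Nat.sub_add_cancel hkn] using hlt

theorem isClosed_setOf_lexLe (w : Seq3) : IsClosed {s : Seq3 | lexLe s w} := by
  refine isClosed_of_closure_subset fun s hs => lexLe_of_forall_cylinder fun n => ?_
  obtain ⟨t, hts, htw⟩ := mem_closure_iff.1 hs _ (PiNat.isOpen_cylinder (fun _ => Fin 3) s n)
    (PiNat.self_mem_cylinder s n)
  exact ⟨t, hts, w, PiNat.self_mem_cylinder w n, htw⟩

theorem mem_betaShift_of_mem_maxSet {w I : Seq3} (h : w ∈ MaxSet) (hwI : lexLe w I) :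
    w ∈ BetaShift I := fun r => (h.2 r).trans hwI

/-- Every shift of `a` lies below some shift of `b`, so that `a` belongs to every
symbolic β-shift containing `b`. -/
def LexDominated (a b : Seq3) : Prop := ∀ r, ∃ r', lexLe (shift^[r] a) (shift^[r'] b)

theorem LexDominated.refl (a : Seq3) : LexDominated a a := fun r => ⟨r, lexLe.refl _⟩

theorem LexDominated.trans {a b c : Seq3} (hab : LexDominated a b) (hbc : LexDominated b c) :
    LexDominated a c := fun r =>
  let ⟨r₁, h₁⟩ := hab r
  let ⟨r₂, h₂⟩ := hbc r₁
  ⟨r₂, h₁.trans h₂⟩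

theorem LexDominated.mem_betaShift {a b w : Seq3} (hab : LexDominated a b)
    (hb : b ∈ BetaShift w) : a ∈ BetaShift w := fun r =>
  let ⟨r', h⟩ := hab r
  h.trans (hb r')

theorem mem_cylinder_add {a b : Seq3} {m n : ℕ} (hm : a ∈ PiNat.cylinder b m)
    (hn : shift^[m] a ∈ PiNat.cylinder (shift^[m] b) n) : a ∈ PiNat.cylinder b (m + n) := by
  intro i hi
  rcases lt_or_ge i m with him | hmi
  · exact hm i him
  · simpa only [iterate_shift_apply, Nat.sub_add_cancel hmi] using hn (i - m) (by omega)

theorem shift_mem_cylinder {a b : Seq3} {n : ℕ} (h : a ∈ PiNat.cylinder b (n + 1)) :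
    shift a ∈ PiNat.cylinder (shift b) n := fun i hi => h (i + 1) (Nat.succ_lt_succ hi)

/-! ### The two elementary substitutions -/

/-- The first letter of the block substituted for a digit. The substitution indexed by `false` is
`0 ↦ 0, 1 ↦ 1, 2 ↦ 20`, the one indexed by `true` is `0 ↦ 1, 1 ↦ 20, 2 ↦ 2`; every block is its
leading digit, possibly followed by `0`. -/
def leadDigit (b : Bool) (c : Fin 3) : Fin 3 := bif b then (if c = 0 then 1 else 2) else c

/-- The digit whose block has two letters, namely `20`. -/
def longDigit (b : Bool) : Fin 3 := bif b then 1 else 2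

/-- The length of the block substituted for a digit. -/
def blockLen (b : Bool) (c : Fin 3) : ℕ := if c = longDigit b then 2 else 1

/-- The image of a sequence under the substitution indexed by `b`, computed digit by digit. -/
def inflate (b : Bool) : Seq3 → Seq3
  | x, 0 => leadDigit b (x 0)
  | x, 1 => if x 0 = longDigit b then 0 else leadDigit b (x 1)
  | x, t + 2 =>
    if x 0 = longDigit b then inflate b (shift x) t else inflate b (shift x) (t + 1)

/-- The position in `inflate b x` of the block of `x j`. -/
def blockStart (b : Bool) (x : Seq3) (j : ℕ) : ℕ := ∑ i ∈ Finset.range j, blockLen b (x i)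

theorem one_le_blockLen (b : Bool) (c : Fin 3) : 1 ≤ blockLen b c := by
  unfold blockLen; split_ifs <;> omega

theorem leadDigit_longDigit (b : Bool) : leadDigit b (longDigit b) = 2 := by cases b <;> rfl

theorem leadDigit_two (b : Bool) : leadDigit b 2 = 2 := by cases b <;> rfl

theorem inflate_apply_zero (b : Bool) (x : Seq3) : inflate b x 0 = leadDigit b (x 0) := by
  rw [inflate]

theorem inflate_apply_one_of_eq {b : Bool} {x : Seq3} (h : x 0 = longDigit b) :
    inflate b x 1 = 0 := by
  rw [inflate, if_pos h]

theorem inflate_apply_one_of_ne {b : Bool} {x : Seq3} (h : x 0 ≠ longDigit b) :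
    inflate b x 1 = leadDigit b (x 1) := by
  rw [inflate, if_neg h]

theorem iterate_shift_blockLen_inflate (b : Bool) (x : Seq3) :
    shift^[blockLen b (x 0)] (inflate b x) = inflate b (shift x) := by
  funext t
  rw [iterate_shift_apply, blockLen]
  split_ifs with h
  · rw [inflate, if_pos h]
  · cases t with
    | zero => rw [inflate_apply_one_of_ne h, inflate_apply_zero, shift]
    | succ t => rw [inflate, if_neg h]

theorem blockStart_succ (b : Bool) (x : Seq3) (j : ℕ) :
    blockStart b x (j + 1) = blockStart b x j + blockLen b (x j) :=
  Finset.sum_range_succ _ _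

theorem le_blockStart (b : Bool) (x : Seq3) (j : ℕ) : j ≤ blockStart b x j := by
  induction j with
  | zero => exact Nat.zero_le _
  | succ j ih =>
    have := one_le_blockLen b (x j)
    rw [blockStart_succ]
    omega

theorem iterate_shift_blockStart_inflate (b : Bool) (x : Seq3) (j : ℕ) :
    shift^[blockStart b x j] (inflate b x) = inflate b (shift^[j] x) := by
  induction j with
  | zero => rfl
  | succ j ih =>
    rw [blockStart_succ, add_comm, ← iterate_shift_iterate_shift, ih, ← iterate_shift_apply_zero x,
      iterate_shift_blockLen_inflate, shift_iterate_shift]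

theorem exists_eq_blockStart_or_eq_add_one (b : Bool) (x : Seq3) (r : ℕ) :
    ∃ j, r = blockStart b x j ∨ (r = blockStart b x j + 1 ∧ x j = longDigit b) := by
  induction r with
  | zero => exact ⟨0, Or.inl rfl⟩
  | succ r ih =>
    obtain ⟨j, rfl | ⟨rfl, hj⟩⟩ := ih
    · by_cases hj : x j = longDigit b
      · exact ⟨j, Or.inr ⟨rfl, hj⟩⟩
      · exact ⟨j + 1, Or.inl (by rw [blockStart_succ, blockLen, if_neg hj])⟩
    · exact ⟨j + 1, Or.inl (by rw [blockStart_succ, blockLen, if_pos hj])⟩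

theorem inflate_mem_cylinder_blockLen {b : Bool} {x y : Seq3} (h : x 0 = y 0) :
    inflate b x ∈ PiNat.cylinder (inflate b y) (blockLen b (x 0)) := by
  intro i hi
  unfold blockLen at hi
  split_ifs at hi with hx
  · interval_cases i
    · rw [inflate_apply_zero, inflate_apply_zero, h]
    · rw [inflate_apply_one_of_eq hx, inflate_apply_one_of_eq (h ▸ hx)]
  · rw [Nat.lt_one_iff.1 hi, inflate_apply_zero, inflate_apply_zero, h]

theorem inflate_mem_cylinder {b : Bool} {x y : Seq3} {n : ℕ}
    (h : x ∈ PiNat.cylinder y (n + 1)) :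
    inflate b x ∈ PiNat.cylinder (inflate b y) (blockLen b (x 0) + n) := by
  have h₀ : x 0 = y 0 := h 0 n.succ_pos
  refine mem_cylinder_add (inflate_mem_cylinder_blockLen h₀) ?_
  rw [iterate_shift_blockLen_inflate, h₀, iterate_shift_blockLen_inflate]
  induction n generalizing x y with
  | zero => exact fun i hi => absurd hi i.not_lt_zero
  | succ n ih =>
    have hs := shift_mem_cylinder h
    have hs₀ : shift x 0 = shift y 0 := hs 0 n.succ_pos
    refine PiNat.cylinder_anti _ ?_ <| mem_cylinder_add (inflate_mem_cylinder_blockLen hs₀) <| by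
      rw [iterate_shift_blockLen_inflate, hs₀, iterate_shift_blockLen_inflate]
      exact ih hs hs₀
    have := one_le_blockLen b (shift x 0)
    omega

theorem inflate_lexLt_inflate (b : Bool) {x y : Seq3} (h : lexLt x y) :
    lexLt (inflate b x) (inflate b y) := by
  obtain ⟨n, heq, hlt⟩ := h
  induction n generalizing x y with
  | zero =>
    by_cases hlead : leadDigit b (x 0) < leadDigit b (y 0)
    · exact lexLt_of_head_lt (by simpa only [inflate_apply_zero] using hlead)
    · have blocks : ∀ (b : Bool) (c d : Fin 3), c < d → ¬ leadDigit b c < leadDigit b d →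
          leadDigit b c = leadDigit b d ∧ c = longDigit b ∧ d ≠ longDigit b ∧
            ∀ e, 0 < leadDigit b e := by decide
      obtain ⟨hlead', hlong, hshort, hpos⟩ := blocks b _ _ hlt hlead
      refine lexLt_of_lt_at_one (by simpa only [inflate_apply_zero] using hlead') ?_
      rw [inflate_apply_one_of_eq hlong, inflate_apply_one_of_ne hshort]
      exact hpos _
  | succ n ih =>
    have h₀ : x 0 = y 0 := heq 0 n.succ_pos
    refine lexLt_of_lexLt_iterate_shift (inflate_mem_cylinder_blockLen h₀) ?_
    rw [iterate_shift_blockLen_inflate, h₀, iterate_shift_blockLen_inflate]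
    exact ih (fun i hi => heq (i + 1) (Nat.succ_lt_succ hi)) hlt

theorem inflate_lexLe_inflate_iff {b : Bool} {x y : Seq3} :
    lexLe (inflate b x) (inflate b y) ↔ lexLe x y := by
  constructor
  · exact fun h => not_lexLt.1 fun hlt => h.not_lexLt (inflate_lexLt_inflate b hlt)
  · rintro (rfl | hlt)
    · exact lexLe.refl _
    · exact (inflate_lexLt_inflate b hlt).lexLe

theorem exists_iterate_shift_inflate_lexLe (b : Bool) (x : Seq3) (r : ℕ) :
    ∃ j, lexLe (shift^[r] (inflate b x)) (inflate b (shift^[j] x)) := by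
  obtain ⟨j, rfl | ⟨rfl, hj⟩⟩ := exists_eq_blockStart_or_eq_add_one b x r
  · exact ⟨j, by rw [iterate_shift_blockStart_inflate]; exact lexLe.refl _⟩
  · refine ⟨j, (lexLt_of_head_lt ?_).lexLe⟩
    rw [← iterate_shift_apply_zero x] at hj
    rw [inflate_apply_zero, hj, leadDigit_longDigit, add_comm, ← iterate_shift_iterate_shift,
      iterate_shift_blockStart_inflate, iterate_shift_apply_zero, inflate_apply_one_of_eq hj]
    decide

theorem LexDominated.inflate (b : Bool) {x y : Seq3} (h : LexDominated x y) :
    LexDominated (inflate b x) (inflate b y) := fun r => by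
  obtain ⟨j, hj⟩ := exists_iterate_shift_inflate_lexLe b x r
  obtain ⟨j', hj'⟩ := h j
  refine ⟨blockStart b y j', hj.trans ?_⟩
  rwa [iterate_shift_blockStart_inflate, inflate_lexLe_inflate_iff]

theorem inflate_mem_maxSet (b : Bool) {x : Seq3} (h : x ∈ MaxSet) : inflate b x ∈ MaxSet := by
  refine ⟨by rw [inflate_apply_zero, h.1, leadDigit_two], fun r => ?_⟩
  obtain ⟨j, hj⟩ := exists_iterate_shift_inflate_lexLe b x r
  exact hj.trans (inflate_lexLe_inflate_iff.2 (h.2 j))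

/-! ### Compositions of substitutions -/

/-- The composition of the substitutions indexed by `b 0, …, b (k - 1)`, with `b 0` outermost. -/
def iterInflate (b : ℕ → Bool) : ℕ → Seq3 → Seq3
  | 0, x => x
  | k + 1, x => iterInflate b k (inflate (b k) x)

theorem iterInflate_congr {b b' : ℕ → Bool} {k : ℕ} (h : ∀ j < k, b j = b' j) (x : Seq3) :
    iterInflate b k x = iterInflate b' k x := by
  induction k generalizing x with
  | zero => rfl
  | succ k ih =>
    rw [iterInflate, iterInflate, h k k.lt_succ_self, ih fun j hj => h j (hj.trans k.lt_succ_self)]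

theorem iterInflate_lexLe_iterInflate_iff {b : ℕ → Bool} {k : ℕ} {x y : Seq3} :
    lexLe (iterInflate b k x) (iterInflate b k y) ↔ lexLe x y := by
  induction k generalizing x y with
  | zero => rfl
  | succ k ih => exact ih.trans inflate_lexLe_inflate_iff

theorem LexDominated.iterInflate (b : ℕ → Bool) (k : ℕ) {x y : Seq3} (h : LexDominated x y) :
    LexDominated (iterInflate b k x) (iterInflate b k y) := by
  induction k generalizing x y with
  | zero => exact h
  | succ k ih => exact ih (h.inflate _)

theorem iterInflate_mem_maxSet (b : ℕ → Bool) (k : ℕ) {x : Seq3} (h : x ∈ MaxSet) :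
    iterInflate b k x ∈ MaxSet := by
  induction k generalizing x with
  | zero => exact h
  | succ k ih => exact ih (inflate_mem_maxSet _ h)

theorem iterInflate_mem_cylinder (b : ℕ → Bool) (k : ℕ) {x y : Seq3} {n : ℕ} (hx : x 0 = 2)
    (h : x ∈ PiNat.cylinder y (n + 1)) :
    iterInflate b k x ∈
      PiNat.cylinder (iterInflate b k y) (n + 1 + Nat.count (fun j => b j = false) k) := by
  induction k generalizing x y n with
  | zero => exact h
  | succ k ih =>
    have hlen : blockLen (b k) (x 0) + n = n + (if b k = false then 1 else 0) + 1 := by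
      rw [hx]
      cases b k <;> simp [blockLen, longDigit] <;> omega
    have hx' : inflate (b k) x 0 = 2 := by rw [inflate_apply_zero, hx, leadDigit_two]
    have hk := ih hx' (hlen ▸ inflate_mem_cylinder h)
    rw [Nat.count_succ]
    exact PiNat.cylinder_anti _ (by omega) hk

theorem exists_iterInflate_mem_cylinder {b : ℕ → Bool} (hb : ∃ᶠ k in atTop, b k = false)
    {x y : Seq3} (hx : x 0 = 2) (hy : y 0 = 2) (n : ℕ) :
    ∃ k, iterInflate b k x ∈ PiNat.cylinder (iterInflate b k y) n := by
  have hinf : {k | b k = false}.Infinite := Nat.frequently_atTop_iff_infinite.1 hb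
  have hxy : x ∈ PiNat.cylinder y (0 + 1) := fun i hi => by rw [Nat.lt_one_iff.1 hi, hx, hy]
  refine ⟨Nat.nth (fun j => b j = false) n,
    PiNat.cylinder_anti _ ?_ (iterInflate_mem_cylinder b _ hx hxy)⟩
  rw [Nat.count_nth_of_infinite hinf]
  omega

theorem iterInflate_add {b : ℕ → Bool} {K : ℕ} {c : Bool} (hb : ∀ k ≥ K, b k = c) (m : ℕ)
    (x : Seq3) : iterInflate b (K + m) x = iterInflate b K ((inflate c)^[m] x) := by
  induction m generalizing x with
  | zero => rfl
  | succ m ih =>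
    rw [← add_assoc, iterInflate, hb _ (K.le_add_right m), ih, Function.iterate_succ_apply]

/-- The sequence `2^∞`. -/
def allTwos : Seq3 := fun _ => 2

theorem allTwos_mem_maxSet : allTwos ∈ MaxSet :=
  ⟨rfl, fun r => Or.inl (funext fun n => iterate_shift_apply allTwos r n)⟩

theorem lexLe_allTwos (x : Seq3) : lexLe x allTwos :=
  not_lexLt.1 fun ⟨n, _, hlt⟩ => absurd (Fin.le_last (x n)) (not_le.2 hlt)

theorem shift_inflate_true {x : Seq3} (hx : x 0 = 2) :
    shift (inflate true x) = inflate true (shift x) := by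
  simpa [hx, blockLen, longDigit] using iterate_shift_blockLen_inflate true x

theorem inflate_true_inflate_true_mem_cylinder_allTwos {x : Seq3} {n : ℕ}
    (h : x ∈ PiNat.cylinder allTwos n) :
    inflate true (inflate true x) ∈ PiNat.cylinder allTwos (n + 1) := by
  have hlead : ∀ c, leadDigit true (leadDigit true c) = 2 := by decide
  have head (x : Seq3) : inflate true (inflate true x) ∈ PiNat.cylinder allTwos 1 := fun i hi => by
    rw [Nat.lt_one_iff.1 hi, inflate_apply_zero, inflate_apply_zero, hlead, allTwos]
  induction n generalizing x with
  | zero => exact head x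
  | succ n ih =>
    have hx : x 0 = 2 := h 0 n.succ_pos
    have hx' : inflate true x 0 = 2 := by rw [inflate_apply_zero, hx, leadDigit_two]
    rw [add_comm]
    refine mem_cylinder_add (head x) ?_
    rw [Function.iterate_one, shift_inflate_true hx', shift_inflate_true hx]
    exact ih (shift_mem_cylinder h)

theorem iterate_inflate_true_mem_cylinder_allTwos (x : Seq3) (n : ℕ) :
    (inflate true)^[2 * n] x ∈ PiNat.cylinder allTwos n := by
  induction n with
  | zero => exact fun i hi => absurd hi i.not_lt_zero
  | succ n ih =>
    rw [Nat.mul_succ, add_comm (2 * n), Function.iterate_add_apply]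
    exact inflate_true_inflate_true_mem_cylinder_allTwos ih

/-! ### Digit counts and their deviation from linear growth -/

theorem birk_succ (s : Seq3) (r : ℕ) : birk s (r + 1) = birk s r + Pi.single (s r) 1 := by
  rw [birk, Finset.sum_range_succ, ← birk]
  congr 1
  funext i
  simp only [kappa, iterate_shift_apply_zero, Pi.single_apply]

theorem birk_apply (s : Seq3) (r : ℕ) (i : Fin 3) :
    birk s r i = Nat.count (fun n => s n = i) r := by
  induction r with
  | zero => simp [birk]
  | succ r ih =>
    rw [birk_succ, Pi.add_apply, ih, Nat.count_succ, Pi.single_apply]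
    simp only [eq_comm (a := i)]
    push_cast
    rfl

theorem birk_add (s : Seq3) (m n : ℕ) : birk s (m + n) = birk s m + birk (shift^[m] s) n := by
  induction n with
  | zero => simp [birk]
  | succ n ih =>
    rw [← add_assoc, birk_succ, ih, birk_succ, iterate_shift_apply, add_comm n m, add_assoc]

/-- The sum of the coordinates of a vector. -/
def mass (V : Fin 3 → ℝ) : ℝ := ∑ i, V i

theorem mass_birk (s : Seq3) (r : ℕ) : mass (birk s r) = r := by
  induction r with
  | zero => simp [mass, birk]
  | succ r ih =>
    rw [mass] at ih ⊢
    simp only [birk_succ, Pi.add_apply, Finset.sum_add_distrib, ih, Finset.sum_pi_single',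
      Finset.mem_univ, if_true, Nat.cast_succ]

theorem mass_smul (c : ℝ) (V : Fin 3 → ℝ) : mass (c • V) = c * mass V :=
  (Finset.mul_sum _ _ _).symm

theorem mass_pos {V : Fin 3 → ℝ} (hV : 0 < V) : 0 < mass V := by
  obtain ⟨hnonneg, i, hi⟩ := Pi.lt_def.1 hV
  exact Finset.sum_pos' (fun i _ => hnonneg i) ⟨i, Finset.mem_univ i, hi⟩

theorem norm_le_mass {V : Fin 3 → ℝ} (hV : 0 ≤ V) : ‖V‖ ≤ mass V := by
  refine (pi_norm_le_iff_of_nonneg (Finset.sum_nonneg fun i _ => hV i)).2 fun i => ?_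
  rw [Real.norm_of_nonneg (hV i)]
  exact Finset.single_le_sum (fun i _ => hV i) (Finset.mem_univ i)

theorem abs_mass_le (V : Fin 3 → ℝ) : |mass V| ≤ 3 * ‖V‖ :=
  calc |mass V| ≤ ∑ i, ‖V i‖ := Finset.abs_sum_le_sum_abs _ _
    _ ≤ ∑ _i : Fin 3, ‖V‖ := Finset.sum_le_sum fun i _ => norm_le_pi_norm V i
    _ = 3 * ‖V‖ := by simp

/-- The point of the plane `mass = 1` on the line spanned by `V`. -/
noncomputable def toSimplex (V : Fin 3 → ℝ) : Fin 3 → ℝ := (mass V)⁻¹ • V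

theorem toSimplex_of_mass_eq_one {V : Fin 3 → ℝ} (h : mass V = 1) : toSimplex V = V := by
  rw [toSimplex, h, inv_one, one_smul]

theorem toSimplex_smul {c : ℝ} (hc : c ≠ 0) (V : Fin 3 → ℝ) :
    toSimplex (c • V) = toSimplex V := by
  rw [toSimplex, toSimplex, mass_smul, mul_inv, mul_comm, mul_smul, inv_smul_smul₀ hc]

theorem norm_birk_sub_toSimplex_le {s : Seq3} {V : Fin 3 → ℝ} {r : ℕ} {t δ : ℝ} (hV : 0 < V)
    (h : ‖birk s r - t • V‖ ≤ δ) : ‖birk s r - (r : ℝ) • toSimplex V‖ ≤ 4 * δ := by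
  have hmass := mass_pos hV
  have hr : (r : ℝ) - t * mass V = mass (birk s r - t • V) := by
    simp only [← mass_birk s r, mass, Pi.sub_apply, Pi.smul_apply, smul_eq_mul,
      Finset.sum_sub_distrib, Finset.mul_sum]
  have herr : |(r : ℝ) - t * mass V| ≤ 3 * δ := by
    rw [hr]
    exact (abs_mass_le _).trans (by linarith)
  have hline : ‖(t - r * (mass V)⁻¹) • V‖ ≤ 3 * δ :=
    calc ‖(t - r * (mass V)⁻¹) • V‖ ≤ |t - r * (mass V)⁻¹| * mass V := by
          rw [norm_smul, Real.norm_eq_abs]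
          gcongr
          exact norm_le_mass hV.le
      _ = |(r : ℝ) - t * mass V| := by
          rw [← abs_of_pos hmass, ← abs_mul, abs_of_pos hmass, ← abs_neg]
          congr 1
          field_simp
          ring
      _ ≤ 3 * δ := herr
  calc ‖birk s r - (r : ℝ) • toSimplex V‖
      = ‖(birk s r - t • V) + (t - r * (mass V)⁻¹) • V‖ := by
        rw [toSimplex, smul_smul, sub_smul]
        congr 1
        abel
    _ ≤ δ + 3 * δ := (norm_add_le _ _).trans (add_le_add h hline)
    _ = 4 * δ := by ring

/-- The digit counts of `s` stay at bounded distance from the half-line `r ↦ r • v`. -/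
def BoundedDeviation (s : Seq3) (v : Fin 3 → ℝ) : Prop :=
  ∃ C : ℝ, ∀ r : ℕ, ‖birk s r - (r : ℝ) • v‖ ≤ C

theorem BoundedDeviation.hasFreq {s : Seq3} {v : Fin 3 → ℝ} (h : BoundedDeviation s v) :
    hasFreq s v := by
  obtain ⟨C, hC⟩ := h
  have hdecay : Tendsto (fun r : ℕ => (r : ℝ)⁻¹ • (birk s r - (r : ℝ) • v)) atTop (𝓝 0) :=
    (tendsto_natCast_atTop_atTop.inv_tendsto_atTop).zero_smul_isBoundedUnder_le
      (isBoundedUnder_of ⟨C, hC⟩)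
  refine tendsto_sub_nhds_zero_iff.1 (hdecay.congr' ?_)
  filter_upwards [eventually_ne_atTop 0] with r hr
  rw [smul_sub, inv_smul_smul₀ (Nat.cast_ne_zero.2 hr)]

theorem BoundedDeviation.of_shift {s : Seq3} {v : Fin 3 → ℝ}
    (h : BoundedDeviation (shift s) v) : BoundedDeviation s v := by
  obtain ⟨C, hC⟩ := h
  have hC₀ : 0 ≤ C := (norm_nonneg _).trans (hC 0)
  refine ⟨‖birk s 1 - v‖ + C, fun r => ?_⟩
  cases r with
  | zero => simpa [birk] using add_nonneg (norm_nonneg (birk s 1 - v)) hC₀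
  | succ r =>
    have hcocycle : birk s (r + 1) - ((r + 1 : ℕ) : ℝ) • v =
        (birk s 1 - v) + (birk (shift s) r - (r : ℝ) • v) := by
      rw [add_comm r 1, birk_add, Function.iterate_one, Nat.cast_add, add_smul, Nat.cast_one,
        one_smul]
      abel
    rw [hcocycle]
    exact (norm_add_le _ _).trans (by gcongr; exact hC r)

theorem BoundedDeviation.of_iterate_shift {s : Seq3} {v : Fin 3 → ℝ} (n : ℕ)
    (h : BoundedDeviation (shift^[n] s) v) : BoundedDeviation s v := by
  induction n generalizing s with
  | zero => exact h
  | succ n ih => exact (ih h).of_shift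

theorem hasFreq.tendsto_count {s : Seq3} {v : Fin 3 → ℝ} (h : hasFreq s v) (i : Fin 3) :
    Tendsto (fun r : ℕ => (r : ℝ)⁻¹ * Nat.count (fun n => s n = i) r) atTop (𝓝 (v i)) := by
  simpa only [Pi.smul_apply, birk_apply, smul_eq_mul] using tendsto_pi_nhds.1 h i

theorem hasFreq.nonneg {s : Seq3} {v : Fin 3 → ℝ} (h : hasFreq s v) : 0 ≤ v := fun i =>
  ge_of_tendsto' (h.tendsto_count i) fun r => by positivity

theorem hasFreq.mass_eq_one {s : Seq3} {v : Fin 3 → ℝ} (h : hasFreq s v) : mass v = 1 := by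
  refine tendsto_nhds_unique (tendsto_finsetSum _ fun i _ => tendsto_pi_nhds.1 h i) ?_
  refine tendsto_const_nhds.congr' ?_
  filter_upwards [eventually_ne_atTop 0] with r hr
  simp only [Pi.smul_apply, smul_eq_mul, ← Finset.mul_sum]
  rw [← mass, mass_birk, inv_mul_cancel₀ (Nat.cast_ne_zero.2 hr)]

theorem pos_of_nonneg_of_mass_eq_one {v : Fin 3 → ℝ} (h₀ : 0 ≤ v) (h₁ : mass v = 1) : 0 < v :=
  h₀.lt_of_ne fun h => by simp [← h, mass] at h₁

theorem hasFreq_toSimplex_of_samples {s : Seq3} {W : Fin 3 → ℝ} {q : ℕ → ℕ}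
    (hq : Tendsto q atTop atTop) (hW : mass W ≠ 0)
    (h : Tendsto (fun j => (q j : ℝ)⁻¹ • birk s j) atTop (𝓝 W)) : hasFreq s (toSimplex W) := by
  have hmass : Tendsto (fun j : ℕ => (q j : ℝ)⁻¹ * j) atTop (𝓝 (mass W)) := by
    refine (tendsto_finsetSum _ fun i _ => tendsto_pi_nhds.1 h i).congr fun j => ?_
    simp only [Pi.smul_apply, smul_eq_mul, ← Finset.mul_sum]
    rw [← mass, mass_birk]
  refine ((hmass.inv₀ hW).smul h).congr' ?_
  filter_upwards [hq.eventually_ne_atTop 0] with j hj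
  have hj' : (q j : ℝ) ≠ 0 := Nat.cast_ne_zero.2 hj
  rw [smul_smul, mul_inv, inv_inv, mul_right_comm, mul_inv_cancel₀ hj', one_mul]

theorem infinite_of_tendsto_count {p : ℕ → Prop} [DecidablePred p] {d : ℝ} (hd : 0 < d)
    (h : Tendsto (fun r : ℕ => (r : ℝ)⁻¹ * Nat.count p r) atTop (𝓝 d)) : {n | p n}.Infinite := by
  intro hfin
  have hdecay : Tendsto (fun r : ℕ => (r : ℝ)⁻¹ • (Nat.count p r : ℝ)) atTop (𝓝 0) :=
    (tendsto_natCast_atTop_atTop.inv_tendsto_atTop).zero_smul_isBoundedUnder_le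
      (isBoundedUnder_of ⟨hfin.toFinset.card, fun r => by
        simpa using Nat.count_le_card hfin r⟩)
  exact hd.ne (tendsto_nhds_unique hdecay h)

/-! ### Digit counts under substitution -/

/-- The incidence matrix of the substitution indexed by `b`, as a linear automorphism: it sends the
digit counts of a word to the digit counts of its image. -/
def incidence (b : Bool) : (Fin 3 → ℝ) ≃ₗ[ℝ] (Fin 3 → ℝ) where
  toFun U := bif b then ![U 1, U 0, U 1 + U 2] else ![U 0 + U 2, U 1, U 2]
  invFun V := bif b then ![V 1, V 0, V 2 - V 0] else ![V 0 - V 2, V 1, V 2]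
  map_add' U W := by cases b <;> ext i <;> fin_cases i <;> simp <;> ring
  map_smul' c U := by cases b <;> ext i <;> fin_cases i <;> simp <;> ring
  left_inv U := by cases b <;> ext i <;> fin_cases i <;> simp
  right_inv V := by cases b <;> ext i <;> fin_cases i <;> simp

theorem incidence_false (U : Fin 3 → ℝ) : incidence false U = ![U 0 + U 2, U 1, U 2] := rfl

theorem incidence_true (U : Fin 3 → ℝ) : incidence true U = ![U 1, U 0, U 1 + U 2] := rfl

theorem incidence_symm_false (V : Fin 3 → ℝ) :
    (incidence false).symm V = ![V 0 - V 2, V 1, V 2] := rfl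

theorem incidence_symm_true (V : Fin 3 → ℝ) :
    (incidence true).symm V = ![V 1, V 0, V 2 - V 0] := rfl

theorem norm_incidence_le (b : Bool) (U : Fin 3 → ℝ) : ‖incidence b U‖ ≤ 2 * ‖U‖ := by
  have hU (i : Fin 3) := abs_le.1 (norm_le_pi_norm U i)
  refine (pi_norm_le_iff_of_nonneg (by positivity)).2 fun i => abs_le.2 ?_
  cases b <;> fin_cases i <;> simp [incidence_false, incidence_true] <;>
    constructor <;> linarith [hU 0, hU 1, hU 2]

theorem incidence_pos (b : Bool) {U : Fin 3 → ℝ} (hU : 0 < U) : 0 < incidence b U := by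
  have hnonneg : 0 ≤ incidence b U := fun i => by
    have h₀ := hU.le 0
    have h₁ := hU.le 1
    have h₂ := hU.le 2
    simp only [Pi.zero_apply] at h₀ h₁ h₂
    cases b <;> fin_cases i <;> simp [incidence_false, incidence_true] <;> linarith
  exact hnonneg.lt_of_ne' ((incidence b).map_ne_zero_iff.2 hU.ne')

theorem birk_blockLen_inflate (b : Bool) (x : Seq3) :
    birk (inflate b x) (blockLen b (x 0)) = incidence b (Pi.single (x 0) 1) := by
  by_cases hx : x 0 = longDigit b
  · rw [blockLen, if_pos hx, birk_succ, birk_succ, inflate_apply_zero, inflate_apply_one_of_eq hx,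
      hx]
    cases b <;> ext i <;> fin_cases i <;>
      simp [birk, longDigit, leadDigit, incidence_false, incidence_true]
  · rw [blockLen, if_neg hx, birk_succ, inflate_apply_zero]
    generalize x 0 = c at hx ⊢
    cases b <;> ext i <;> fin_cases c <;> fin_cases i <;>
      simp_all [birk, longDigit, leadDigit, incidence_false, incidence_true]

theorem birk_blockStart_inflate (b : Bool) (x : Seq3) (j : ℕ) :
    birk (inflate b x) (blockStart b x j) = incidence b (birk x j) := by
  induction j with
  | zero => simp [blockStart, birk]
  | succ j ih =>
    rw [blockStart_succ, birk_add, iterate_shift_blockStart_inflate, ih,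
      ← iterate_shift_apply_zero x, birk_blockLen_inflate, iterate_shift_apply_zero, birk_succ,
      map_add]

theorem BoundedDeviation.inflate {b : Bool} {x : Seq3} {U : Fin 3 → ℝ} (hU : 0 < U)
    (h : BoundedDeviation x (toSimplex U)) :
    BoundedDeviation (inflate b x) (toSimplex (incidence b U)) := by
  obtain ⟨C, hC⟩ := h
  have atBlock (j : ℕ) : ‖birk (_root_.inflate b x) (blockStart b x j) -
      ((j : ℝ) * (mass U)⁻¹) • incidence b U‖ ≤ 2 * C :=
    calc _ = ‖incidence b (birk x j - (j : ℝ) • toSimplex U)‖ := by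
          rw [birk_blockStart_inflate, map_sub, toSimplex, smul_smul, map_smul]
      _ ≤ 2 * ‖birk x j - (j : ℝ) • toSimplex U‖ := norm_incidence_le _ _
      _ ≤ 2 * C := by gcongr; exact hC j
  refine ⟨4 * (2 * C + 1), fun r => ?_⟩
  obtain ⟨j, rfl | ⟨rfl, -⟩⟩ := exists_eq_blockStart_or_eq_add_one b x r <;>
    refine norm_birk_sub_toSimplex_le (t := j * (mass U)⁻¹) (incidence_pos b hU) ?_
  · exact (atBlock j).trans (by linarith)
  · rw [birk_succ, add_sub_right_comm]
    refine (norm_add_le _ _).trans (add_le_add (atBlock j) ?_)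
    rw [Pi.norm_single, norm_one]

/-! ### Sequences of bounded deviation -/

theorem toSimplex_nonneg {V : Fin 3 → ℝ} (hV : 0 < V) : 0 ≤ toSimplex V :=
  smul_nonneg (inv_nonneg.2 (mass_pos hV).le) hV.le

theorem mass_toSimplex {V : Fin 3 → ℝ} (hV : 0 < V) : mass (toSimplex V) = 1 := by
  rw [toSimplex, mass_smul, inv_mul_cancel₀ (mass_pos hV).ne']

/-- A digit at which `d` is positive, provided that `d` has positive mass. -/
noncomputable def positiveDigit (d : Fin 3 → ℝ) : Fin 3 :=
  if 0 < d 0 then 0 else if 0 < d 1 then 1 else 2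

/-- The deficit `r • v - birk s r` of the greedy sequence `s = greedySeq v`, which always appends a
digit that lags behind its target frequency. -/
noncomputable def greedyDeficit (v : Fin 3 → ℝ) : ℕ → Fin 3 → ℝ
  | 0 => 0
  | r + 1 => greedyDeficit v r + v - Pi.single (positiveDigit (greedyDeficit v r + v)) 1

/-- The sequence that approximates the digit frequency `v` greedily. -/
noncomputable def greedySeq (v : Fin 3 → ℝ) : Seq3 := fun r =>
  positiveDigit (greedyDeficit v r + v)

theorem apply_positiveDigit_pos {d : Fin 3 → ℝ} (h : 0 < mass d) : 0 < d (positiveDigit d) := by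
  rw [mass, Fin.sum_univ_three] at h
  unfold positiveDigit
  split_ifs with h₀ h₁
  · exact h₀
  · exact h₁
  · linarith

theorem greedyDeficit_eq (v : Fin 3 → ℝ) (r : ℕ) :
    greedyDeficit v r = (r : ℝ) • v - birk (greedySeq v) r := by
  induction r with
  | zero => simp [greedyDeficit, birk]
  | succ r ih =>
    rw [greedyDeficit, ← greedySeq, ih, birk_succ, Nat.cast_succ, add_smul, one_smul]
    abel

theorem mass_greedyDeficit {v : Fin 3 → ℝ} (hv : mass v = 1) (r : ℕ) :
    mass (greedyDeficit v r) = 0 := by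
  have hr := mass_birk (greedySeq v) r
  rw [mass] at hv hr ⊢
  simp [greedyDeficit_eq, ← Finset.mul_sum, hv, hr]

theorem neg_one_le_greedyDeficit {v : Fin 3 → ℝ} (h₀ : 0 ≤ v) (h₁ : mass v = 1) (r : ℕ)
    (i : Fin 3) : -1 ≤ greedyDeficit v r i := by
  induction r with
  | zero => simp [greedyDeficit]
  | succ r ih =>
    have hmass : 0 < mass (greedyDeficit v r + v) := by
      have h := mass_greedyDeficit h₁ r
      rw [mass] at h h₁ ⊢
      simp [Finset.sum_add_distrib, h, h₁]
    have hlag := apply_positiveDigit_pos hmass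
    have hv : 0 ≤ v i := h₀ i
    rw [greedyDeficit, Pi.sub_apply, Pi.single_apply]
    split_ifs with hi
    · rw [← hi] at hlag
      linarith
    · rw [Pi.add_apply]
      linarith

theorem boundedDeviation_greedySeq {v : Fin 3 → ℝ} (h₀ : 0 ≤ v) (h₁ : mass v = 1) :
    BoundedDeviation (greedySeq v) v := by
  refine ⟨2, fun r => ?_⟩
  rw [← norm_neg, neg_sub, ← greedyDeficit_eq]
  have hsum := mass_greedyDeficit h₁ r
  have hlow := neg_one_le_greedyDeficit h₀ h₁ r
  rw [mass, Fin.sum_univ_three] at hsum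
  refine (pi_norm_le_iff_of_nonneg zero_le_two).2 fun i => abs_le.2 ⟨by linarith [hlow i], ?_⟩
  fin_cases i <;> simp only [Fin.zero_eta, Fin.mk_one, Fin.reduceFinMk] <;>
    linarith [hlow 0, hlow 1, hlow 2]

theorem BoundedDeviation.exists_lt_apply_eq {s : Seq3} {v : Fin 3 → ℝ}
    (h : BoundedDeviation s v) {l : Fin 3} (hl : 0 < v l) :
    ∃ N, ∀ t, ∃ i < N, s (t + i) = l := by
  obtain ⟨C, hC⟩ := h
  obtain ⟨N, hN⟩ := exists_nat_gt (2 * C / v l)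
  refine ⟨N, fun t => ?_⟩
  by_contra! hne
  have hconst : birk s (t + N) l = birk s t l := by
    rw [birk_apply, birk_apply, Nat.count_add, (Nat.count_iff_forall_not (n := N)).2 hne, add_zero]
  have hcoord (r : ℕ) := abs_le.1 ((norm_le_pi_norm _ l).trans (hC r))
  have hstart := (hcoord t).1
  have hend := (hcoord (t + N)).1
  have hstart' := (hcoord t).2
  simp only [Pi.sub_apply, Pi.smul_apply, smul_eq_mul, hconst] at hstart hend hstart'
  rw [div_lt_iff₀ hl] at hN
  push_cast at hend
  linarith

/-! ### Maximal sequences with a given frequency -/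

theorem exists_mem_maxSet_iterate_shift_eq {s : Seq3} {N : ℕ}
    (h : ∀ t, ∃ i < N, s (t + i) ≠ 2) : ∃ m ∈ MaxSet, shift^[N + 1] m = s := by
  set m : Seq3 := fun t => if t < N then 2 else if t = N then 0 else s (t - (N + 1)) with hm
  have initial {t : ℕ} (ht : t < N) : m t = 2 := if_pos ht
  have zero_at : m N = 0 := by simp [hm]
  have tail (t : ℕ) : m (t + (N + 1)) = s t := by
    simp only [hm]
    rw [if_neg (by omega), if_neg (by omega), Nat.add_sub_cancel]
  have hN : 0 < N := let ⟨i, hi, _⟩ := h 0; i.zero_le.trans_lt hi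
  have lexLe_of_exists (r : ℕ) (hr : ∃ i, i < N ∧ m (i + r) ≠ 2) : lexLe (shift^[r] m) m := by
    classical
    obtain ⟨hlt, hne⟩ := Nat.find_spec hr
    refine lexLt.lexLe ⟨Nat.find hr, fun i hi => ?_, ?_⟩
    · rw [iterate_shift_apply, initial (hi.trans hlt)]
      by_contra hi'
      exact Nat.find_min hr hi ⟨hi.trans hlt, hi'⟩
    · rw [iterate_shift_apply, initial hlt]
      exact Fin.lt_last_iff_ne_last.2 hne
  refine ⟨m, ⟨initial hN, fun r => ?_⟩, funext fun t => by rw [iterate_shift_apply, tail]⟩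
  rcases r.eq_zero_or_pos with rfl | hr
  · exact lexLe.refl _
  · apply lexLe_of_exists
    rcases le_or_gt r N with hrN | hNr
    · exact ⟨N - r, by omega, by rw [Nat.sub_add_cancel hrN, zero_at]; decide⟩
    · obtain ⟨i, hi, hne⟩ := h (r - (N + 1))
      refine ⟨i, hi, ?_⟩
      rwa [show i + r = r - (N + 1) + i + (N + 1) by omega, tail]

theorem boundedDeviation_allTwos {v : Fin 3 → ℝ} (h₀ : v 0 = 0) (h₁ : v 1 = 0)
    (hv : mass v = 1) : BoundedDeviation allTwos v := by
  have hv₂ : v = Pi.single 2 1 := by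
    rw [mass, Fin.sum_univ_three] at hv
    ext i
    fin_cases i <;> simp <;> linarith
  refine ⟨0, fun r => le_of_eq (norm_eq_zero.2 (sub_eq_zero.2 ?_))⟩
  induction r with
  | zero => simp [birk]
  | succ r ih => rw [birk_succ, ih, allTwos, Nat.cast_succ, add_smul, one_smul, hv₂]

theorem exists_mem_maxSet_boundedDeviation {v : Fin 3 → ℝ} (h₀ : 0 ≤ v) (h₁ : mass v = 1) :
    ∃ m ∈ MaxSet, BoundedDeviation m v := by
  by_cases hv : v 0 = 0 ∧ v 1 = 0
  · exact ⟨allTwos, allTwos_mem_maxSet, boundedDeviation_allTwos hv.1 hv.2 h₁⟩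
  · obtain ⟨l, hl₂, hl⟩ : ∃ l : Fin 3, l ≠ 2 ∧ 0 < v l := by
      by_contra! hle
      exact hv ⟨(hle 0 (by decide)).antisymm (h₀ 0), (hle 1 (by decide)).antisymm (h₀ 1)⟩
    have hdev := boundedDeviation_greedySeq h₀ h₁
    obtain ⟨N, hN⟩ := hdev.exists_lt_apply_eq hl
    obtain ⟨m, hm, hshift⟩ := exists_mem_maxSet_iterate_shift_eq fun t =>
      let ⟨i, hi, hil⟩ := hN t
      ⟨i, hi, hil.trans_ne hl₂⟩
    exact ⟨m, hm, .of_iterate_shift (N + 1) (hshift ▸ hdev)⟩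

/-! ### Minimal sets -/

section MinimalSets

variable {X : Type*} [TopologicalSpace X] {f : X → X}

theorem mapsTo_closure_forward_orbit (hf : Continuous f) (x : X) :
    Set.MapsTo f (closure {y | ∃ n : ℕ, f^[n] x = y}) (closure {y | ∃ n : ℕ, f^[n] x = y}) := by
  refine Set.MapsTo.closure ?_ hf
  rintro _ ⟨n, rfl⟩
  exact ⟨n + 1, Function.iterate_succ_apply' f n x⟩

theorem closure_forward_orbit_subset {C : Set X} (hC : IsClosed C) (hinv : Set.MapsTo f C C)
    {x : X} (hx : x ∈ C) : closure {y | ∃ n : ℕ, f^[n] x = y} ⊆ C := by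
  refine closure_minimal ?_ hC
  rintro _ ⟨n, rfl⟩
  exact hinv.iterate n hx

theorem exists_minimal_closed_invariant_subset {F : Set X} (hne : F.Nonempty)
    (hcompact : IsCompact F) (hclosed : IsClosed F) (hinv : Set.MapsTo f F F) :
    ∃ Y ⊆ F, Minimal (fun C => C.Nonempty ∧ IsClosed C ∧ Set.MapsTo f C C ∧ C ⊆ F) Y := by
  refine zorn_superset_nonempty {C | C.Nonempty ∧ IsClosed C ∧ Set.MapsTo f C C ∧ C ⊆ F}
    (fun c hc hchain hcne => ?_) F ⟨hne, hclosed, hinv, subset_rfl⟩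
  have : Nonempty c := hcne.to_subtype
  obtain ⟨C₀, hC₀⟩ := hcne
  refine ⟨⋂₀ c, ⟨?_, ?_, ?_, ?_⟩, fun C hC => Set.sInter_subset_of_mem hC⟩
  · exact IsCompact.nonempty_sInter_of_directed_nonempty_isCompact_isClosed
      (fun A hA B hB => (hchain.total hA hB).elim (fun h => ⟨A, hA, subset_rfl, h⟩)
        (fun h => ⟨B, hB, h, subset_rfl⟩))
      (fun C hC => (hc hC).1)
      (fun C hC => hcompact.of_isClosed_subset (hc hC).2.1 (hc hC).2.2.2)
      (fun C hC => (hc hC).2.1)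
  · exact isClosed_sInter fun C hC => (hc hC).2.1
  · exact fun x hx C hC => (hc hC).2.2.1 (hx C hC)
  · exact (Set.sInter_subset_of_mem hC₀).trans (hc hC₀).2.2.2

theorem exists_isMinimalSet_subset (hf : Continuous f) {F : Set X} (hne : F.Nonempty)
    (hcompact : IsCompact F) (hclosed : IsClosed F) (hinv : Set.MapsTo f F F) :
    ∃ Y ⊆ F, IsMinimalSet f Y := by
  obtain ⟨Y, hYF, ⟨hYne, hYclosed, hYinv, -⟩, hmin⟩ :=
    exists_minimal_closed_invariant_subset hne hcompact hclosed hinv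
  refine ⟨Y, hYF, hYne, hcompact.of_isClosed_subset hYclosed hYF, hYinv, fun x hx => ?_⟩
  have horbit := closure_forward_orbit_subset hYclosed hYinv hx
  exact hmin ⟨⟨x, subset_closure ⟨0, rfl⟩⟩, isClosed_closure, mapsTo_closure_forward_orbit hf x,
    horbit.trans hYF⟩ horbit

end MinimalSets

theorem continuous_shift : Continuous shift :=
  continuous_pi fun n => continuous_apply (n + 1)

theorem continuous_birk (r : ℕ) : Continuous fun s => birk s r := by
  refine continuous_finsetSum _ fun i _ => ?_
  have hdigit : Continuous fun c : Fin 3 => fun j : Fin 3 => if j = c then (1 : ℝ) else 0 :=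
    continuous_of_discreteTopology
  exact hdigit.comp ((continuous_apply 0).comp (continuous_shift.iterate i))

theorem BoundedDeviation.exists_forall_iterate_shift {s : Seq3} {v : Fin 3 → ℝ}
    (h : BoundedDeviation s v) :
    ∃ C, ∀ p r : ℕ, ‖birk (shift^[p] s) r - (r : ℝ) • v‖ ≤ C := by
  obtain ⟨C, hC⟩ := h
  refine ⟨C + C, fun p r => ?_⟩
  have hcocycle : birk (shift^[p] s) r - (r : ℝ) • v =
      (birk s (p + r) - ((p + r : ℕ) : ℝ) • v) - (birk s p - (p : ℝ) • v) := by
    rw [birk_add, Nat.cast_add, add_smul]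
    abel
  rw [hcocycle]
  exact (norm_sub_le _ _).trans (add_le_add (hC _) (hC _))

theorem BoundedDeviation.exists_isMinimalSet {g w : Seq3} {v : Fin 3 → ℝ}
    (hdev : BoundedDeviation g v) (hg : g ∈ BetaShift w) :
    ∃ Y : Set Seq3, IsMinimalSet shift Y ∧ Y ⊆ BetaShift w ∧
      (∃ M : ℝ, 0 < M ∧ ∀ s ∈ Y, ∀ r : ℕ, ‖birk s r - (r : ℝ) • v‖ < M) ∧
      ∀ s ∈ Y, _root_.hasFreq s v := by
  obtain ⟨C, hC⟩ := hdev.exists_forall_iterate_shift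
  set F : Set Seq3 := {s | ∀ p : ℕ, lexLe (shift^[p] s) w ∧
    ∀ r : ℕ, ‖birk (shift^[p] s) r - (r : ℝ) • v‖ ≤ C} with hF
  have hclosed : IsClosed F := by
    simp only [hF, Set.ofPred_forall, Set.ofPred_and]
    refine isClosed_iInter fun p => .inter ?_ (isClosed_iInter fun r => ?_)
    · exact (isClosed_setOf_lexLe w).preimage (continuous_shift.iterate p)
    · exact isClosed_le (((continuous_birk r).comp (continuous_shift.iterate p)).sub
        continuous_const).norm continuous_const
  have hinv : Set.MapsTo shift F F := fun s hs p => by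
    rw [← Function.iterate_succ_apply]
    exact hs (p + 1)
  obtain ⟨Y, hYF, hY⟩ := exists_isMinimalSet_subset continuous_shift ⟨g, fun p => ⟨hg p, hC p⟩⟩
    hclosed.isCompact hclosed hinv
  have hbound (s : Seq3) (hs : s ∈ Y) (r : ℕ) := (hYF hs 0).2 r
  refine ⟨Y, hY, fun s hs p => (hYF hs p).1, ⟨C + 1, ?_, fun s hs r => ?_⟩, fun s hs => ?_⟩
  · linarith [(norm_nonneg _).trans (hC 0 0)]
  · exact (hbound s hs r).trans_lt (lt_add_one C)
  · exact BoundedDeviation.hasFreq ⟨C, hbound s hs⟩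

/-! ### Desubstitution -/

theorem tendsto_incidence_symm {v : Fin 3 → ℝ} {u : ℕ → Fin 3 → ℝ} (b : Bool)
    (h : Tendsto u atTop (𝓝 v)) :
    Tendsto (fun r => (incidence b).symm (u r)) atTop (𝓝 ((incidence b).symm v)) :=
  ((incidence b).symm.toLinearMap.continuous_of_finiteDimensional.tendsto v).comp h

theorem inflate_lexLt_iterate_shift {b : Bool} {x s : Seq3} {p : ℕ}
    (hx : x 0 = longDigit b ∨ leadDigit b (x 0) < 2) (h₂ : s p = 2) (h₀ : s (p + 1) ≠ 0) :
    lexLt (inflate b x) (shift^[p] s) := by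
  rcases hx with hlong | hlead
  · refine lexLt_of_lt_at_one ?_ ?_
    · rw [inflate_apply_zero, hlong, leadDigit_longDigit, iterate_shift_apply_zero, h₂]
    · rw [inflate_apply_one_of_eq hlong, iterate_shift_apply_one]
      exact Fin.pos_of_ne_zero h₀
  · exact lexLt_of_head_lt (by rwa [inflate_apply_zero, iterate_shift_apply_zero, h₂])

theorem lexDominated_inflate_false {x s : Seq3} {p : ℕ} (h₂ : s p = 2) (h₀ : s (p + 1) ≠ 0) :
    LexDominated (inflate false x) s := fun r => by
  obtain ⟨j, hj⟩ := exists_iterate_shift_inflate_lexLe false x r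
  have hdigit : ∀ c, c = longDigit false ∨ leadDigit false c < 2 := by decide
  exact ⟨p, hj.trans (inflate_lexLt_iterate_shift (hdigit _) h₂ h₀).lexLe⟩

/-- The positions at which the blocks of `s` start, when `s` is parsed into the blocks `0`, `1`
and `20`. -/
def parsePos (s : Seq3) : ℕ → ℕ
  | 0 => 0
  | j + 1 => parsePos s j + blockLen false (s (parsePos s j))

theorem inflate_false_parse {s : Seq3} (h : ∀ p, s p = 2 → s (p + 1) = 0) :
    inflate false (fun j => s (parsePos s j)) = s := by
  set x : Seq3 := fun j => s (parsePos s j)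
  have hpos : ∀ j, blockStart false x j = parsePos s j := fun j => by
    induction j with
    | zero => rfl
    | succ j ih => rw [blockStart_succ, ih, parsePos]
  funext t
  obtain ⟨j, rfl | ⟨rfl, hj⟩⟩ := exists_eq_blockStart_or_eq_add_one false x t
  · rw [← iterate_shift_apply_zero (inflate false x), iterate_shift_blockStart_inflate,
      inflate_apply_zero, iterate_shift_apply_zero, hpos]
    rfl
  · rw [← iterate_shift_apply_one (inflate false x), iterate_shift_blockStart_inflate,
      inflate_apply_one_of_eq (by rwa [iterate_shift_apply_zero]), hpos, h _ hj]

theorem hasFreq.of_inflate {b : Bool} {x : Seq3} {v : Fin 3 → ℝ} (h : hasFreq (inflate b x) v)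
    (hv : mass ((incidence b).symm v) ≠ 0) : hasFreq x (toSimplex ((incidence b).symm v)) := by
  have hstart : Tendsto (blockStart b x) atTop atTop :=
    tendsto_atTop_mono (le_blockStart b x) tendsto_id
  refine hasFreq_toSimplex_of_samples hstart hv ?_
  refine (tendsto_incidence_symm b (h.comp hstart)).congr fun j => ?_
  rw [Function.comp_apply, map_smul, birk_blockStart_inflate, LinearEquiv.symm_apply_apply]

theorem hasFreq.exists_inflate_false_lexDominated {s : Seq3} {v : Fin 3 → ℝ} (h : hasFreq s v)
    (hv : 0 < (incidence false).symm v) :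
    ∃ x, hasFreq x (toSimplex ((incidence false).symm v)) ∧ LexDominated (inflate false x) s := by
  by_cases hs : ∀ p, s p = 2 → s (p + 1) = 0
  · rw [← inflate_false_parse hs] at h ⊢
    exact ⟨_, h.of_inflate (mass_pos hv).ne', .refl _⟩
  · push Not at hs
    obtain ⟨p, h₂, h₀⟩ := hs
    exact ⟨_, (boundedDeviation_greedySeq (toSimplex_nonneg hv) (mass_toSimplex hv)).hasFreq,
      lexDominated_inflate_false h₂ h₀⟩

/-! ### Bracket matching -/

/-- The height of the path that goes up at every `2` and down at every `0`. Reading `2` as an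
opening and `0` as a closing bracket, it is the nesting depth. -/
def height (s : Seq3) (t : ℕ) : ℤ := Nat.count (fun n => s n = 2) t - Nat.count (fun n => s n = 0) t

/-- The bracket opened at position `t` is never closed. -/
def IsUnmatched (s : Seq3) (t : ℕ) : Prop := ∀ u > t, height s t < height s u

/-- The height never drops below its value at `t` after `t`. -/
def IsFutureMin (s : Seq3) (t : ℕ) : Prop := ∀ u ≥ t, height s t ≤ height s u

/-- The minimum of the height from `t` on. It is a junk value unless the height is bounded below. -/
noncomputable def futureMin (s : Seq3) (t : ℕ) : ℤ := sInf (height s '' Set.Ici t)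

section BracketMatching

variable {s : Seq3} {t : ℕ}

theorem height_succ (s : Seq3) (t : ℕ) : height s (t + 1) =
    height s t + (if s t = 2 then 1 else 0) - (if s t = 0 then 1 else 0) := by
  simp only [height, Nat.count_succ]
  push_cast
  ring

theorem height_succ_of_eq_zero (h : s t = 0) : height s (t + 1) = height s t - 1 := by
  simp [height_succ, h]

theorem height_succ_of_eq_one (h : s t = 1) : height s (t + 1) = height s t := by
  simp [height_succ, h]

theorem height_succ_of_eq_two (h : s t = 2) : height s (t + 1) = height s t + 1 := by
  simp [height_succ, h]

theorem eq_zero_or_one_or_two (c : Fin 3) : c = 0 ∨ c = 1 ∨ c = 2 := by decide +revert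

theorem IsUnmatched.apply_eq_two (h : IsUnmatched s t) : s t = 2 := by
  have hup := h (t + 1) t.lt_succ_self
  rcases eq_zero_or_one_or_two (s t) with h₀ | h₁ | h₂
  · rw [height_succ_of_eq_zero h₀] at hup; omega
  · rw [height_succ_of_eq_one h₁] at hup; omega
  · exact h₂

theorem IsUnmatched.apply_succ_ne_zero (h : IsUnmatched s t) : s (t + 1) ≠ 0 := fun h₀ => by
  have hlt := h (t + 1 + 1) (by omega)
  rw [height_succ_of_eq_zero h₀, height_succ_of_eq_two h.apply_eq_two] at hlt
  omega

theorem IsUnmatched.isFutureMin (h : IsUnmatched s t) : IsFutureMin s t := fun u hu =>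
  hu.eq_or_lt.elim (fun h' => h' ▸ le_rfl) fun h' => (h u h').le

theorem IsFutureMin.apply_ne_zero (h : IsFutureMin s t) : s t ≠ 0 := fun h₀ => by
  have := h (t + 1) t.le_succ
  rw [height_succ_of_eq_zero h₀] at this
  omega

theorem IsFutureMin.of_height_le {t' : ℕ} (h : IsFutureMin s t) (htt' : t ≤ t')
    (hle : height s t' ≤ height s t) : IsFutureMin s t' := fun u hu =>
  hle.trans (h u (htt'.trans hu))

theorem IsUnmatched.isFutureMin_succ (h : IsUnmatched s t) : IsFutureMin s (t + 1) := fun u hu => by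
  rw [height_succ_of_eq_two h.apply_eq_two]
  exact h u hu

theorem futureMin_isLeast (hs : Tendsto (height s) atTop atTop) (t : ℕ) :
    IsLeast (height s '' Set.Ici t) (futureMin s t) := by
  have hbdd : BddBelow (height s '' Set.Ici t) :=
    (bddBelow_range_of_tendsto_atTop_atTop hs).mono (Set.image_subset_range _ _)
  exact ⟨Int.csInf_mem (Set.nonempty_Ici.image _) hbdd, fun _ hz => csInf_le hbdd hz⟩

theorem futureMin_eq_min (hs : Tendsto (height s) atTop atTop) (t : ℕ) :
    futureMin s t = min (height s t) (futureMin s (t + 1)) := by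
  refine (futureMin_isLeast hs t).unique ?_
  have hIci : Set.Ici t = {t} ∪ Set.Ici (t + 1) := by ext u; simp; omega
  rw [hIci, Set.image_union, Set.image_singleton]
  exact isLeast_singleton.union (futureMin_isLeast hs (t + 1))

theorem isUnmatched_iff (hs : Tendsto (height s) atTop atTop) :
    IsUnmatched s t ↔ height s t < futureMin s (t + 1) := by
  rw [(futureMin_isLeast hs (t + 1)).lt_iff]
  simp [IsUnmatched]

open Classical in
theorem futureMin_eq_add_count (hs : Tendsto (height s) atTop atTop) (t : ℕ) :
    futureMin s t = futureMin s 0 + Nat.count (IsUnmatched s) t := by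
  induction t with
  | zero => simp
  | succ t ih =>
    have hmin := futureMin_eq_min hs t
    rw [Nat.count_succ, Nat.cast_add, ← add_assoc, ← ih]
    split_ifs with h
    · have hle := (futureMin_isLeast hs (t + 1)).2 ⟨t + 1, Set.self_mem_Ici, rfl⟩
      rw [height_succ_of_eq_two h.apply_eq_two] at hle
      have hlt := (isUnmatched_iff hs).1 h
      rw [min_eq_left hlt.le] at hmin
      push_cast
      omega
    · rw [isUnmatched_iff hs, not_lt] at h
      rw [min_eq_right h] at hmin
      simp [hmin]

theorem tendsto_inv_mul_height {v : Fin 3 → ℝ} (h : hasFreq s v) :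
    Tendsto (fun r : ℕ => (r : ℝ)⁻¹ * height s r) atTop (𝓝 (v 2 - v 0)) := by
  refine ((h.tendsto_count 2).sub (h.tendsto_count 0)).congr fun r => ?_
  rw [← mul_sub, height]
  push_cast
  rfl

theorem tendsto_height_atTop {v : Fin 3 → ℝ} (h : hasFreq s v) (hv : v 0 < v 2) :
    Tendsto (height s) atTop atTop := by
  refine (tendsto_intCast_atTop_iff (R := ℝ)).1 ?_
  refine (tendsto_natCast_atTop_atTop.atTop_mul_pos (sub_pos.2 hv)
    (tendsto_inv_mul_height h)).congr' ?_
  filter_upwards [eventually_ne_atTop 0] with r hr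
  rw [mul_inv_cancel_left₀ (Nat.cast_ne_zero.2 hr)]

theorem tendsto_inv_mul_futureMin {v : Fin 3 → ℝ} (h : hasFreq s v) (hv : v 0 < v 2) :
    Tendsto (fun r : ℕ => (r : ℝ)⁻¹ * futureMin s r) atTop (𝓝 (v 2 - v 0)) := by
  have hmin := futureMin_isLeast (tendsto_height_atTop h hv)
  have hheight := tendsto_inv_mul_height h
  refine tendsto_order.2 ⟨fun a ha => ?_, fun a ha => ?_⟩
  · obtain ⟨d, hd, hdv⟩ := exists_between (max_lt ha (sub_pos.2 hv))
    obtain ⟨R, hR⟩ := eventually_atTop.1 ((tendsto_order.1 hheight).1 d hdv)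
    filter_upwards [eventually_ge_atTop R, eventually_gt_atTop 0] with r hr hr₀
    obtain ⟨u, hu, hmu⟩ := (hmin r).1
    have hr₀' : (0 : ℝ) < r := Nat.cast_pos.2 hr₀
    have hru : (r : ℝ) ≤ u := Nat.cast_le.2 hu
    have hd₀ : 0 ≤ d := ((le_max_right a 0).trans_lt hd).le
    have hdu : u * d < height s u := (lt_inv_mul_iff₀ (hr₀'.trans_le hru)).1 (hR u (hr.trans hu))
    rw [lt_inv_mul_iff₀ hr₀', ← hmu]
    calc r * a ≤ r * d := by gcongr; exact ((le_max_left a 0).trans_lt hd).le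
      _ ≤ u * d := by gcongr
      _ < height s u := hdu
  · filter_upwards [(tendsto_order.1 hheight).2 a ha] with r hr
    refine lt_of_le_of_lt ?_ hr
    gcongr
    exact (hmin r).2 ⟨r, Set.self_mem_Ici, rfl⟩

open Classical in
theorem tendsto_inv_mul_count_isUnmatched {v : Fin 3 → ℝ} (h : hasFreq s v) (hv : v 0 < v 2) :
    Tendsto (fun r : ℕ => (r : ℝ)⁻¹ * Nat.count (IsUnmatched s) r) atTop (𝓝 (v 2 - v 0)) := by
  have hconst : Tendsto (fun r : ℕ => (r : ℝ)⁻¹ * futureMin s 0) atTop (𝓝 0) := by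
    simpa using tendsto_natCast_atTop_atTop.inv_tendsto_atTop.mul_const (futureMin s 0 : ℝ)
  have hlim := (tendsto_inv_mul_futureMin h hv).sub hconst
  rw [sub_zero] at hlim
  refine hlim.congr fun r => ?_
  rw [futureMin_eq_add_count (tendsto_height_atTop h hv) r]
  push_cast
  ring

theorem exists_isUnmatched {v : Fin 3 → ℝ} (h : hasFreq s v) (hv : v 0 < v 2) :
    ∃ p, IsUnmatched s p := by
  classical
  exact (infinite_of_tendsto_count (sub_pos.2 hv)
    (tendsto_inv_mul_count_isUnmatched h hv)).nonempty

open Classical in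
/-- The sequence obtained from `s` by deleting the digits `0` and recoding the others: `1` becomes
`0`, an unmatched `2` becomes `2` and a matched `2` becomes `1`. Applying the substitution indexed
by `true` reinserts each deleted `0` directly after the `2` that it matches. -/
noncomputable def contraction (s : Seq3) (j : ℕ) : Fin 3 :=
  let t := Nat.nth (fun n => s n ≠ 0) j
  if s t = 1 then 0 else if IsUnmatched s t then 2 else 1

theorem contraction_eq_zero_iff {j : ℕ} :
    contraction s j = 0 ↔ s (Nat.nth (fun n => s n ≠ 0) j) = 1 := by
  unfold contraction
  grind

theorem contraction_eq_two_iff {j : ℕ} :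
    contraction s j = 2 ↔ IsUnmatched s (Nat.nth (fun n => s n ≠ 0) j) := by
  have := @IsUnmatched.apply_eq_two s
  unfold contraction
  grind

open Classical in
theorem contraction_count (h : s t ≠ 0) :
    contraction s (Nat.count (fun n => s n ≠ 0) t) =
      if s t = 1 then 0 else if IsUnmatched s t then 2 else 1 := by
  rw [contraction, Nat.nth_count h]

theorem count_comp_nth_count {p P : ℕ → Prop} [DecidablePred p] [DecidablePred P]
    (hpP : ∀ n, p n → P n) (r : ℕ) :
    Nat.count (fun j => p (Nat.nth P j)) (Nat.count P r) = Nat.count p r := by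
  induction r with
  | zero => simp
  | succ r ih =>
    by_cases hP : P r
    · rw [Nat.count_succ, if_pos hP, Nat.count_succ, Nat.count_succ, ih]
      simp only [Nat.nth_count hP]
    · rw [Nat.count_succ, if_neg hP, Nat.count_succ, if_neg (mt (hpP r) hP), add_zero, add_zero, ih]

theorem count_add_count_not (p : ℕ → Prop) [DecidablePred p] (r : ℕ) :
    Nat.count p r + Nat.count (fun n => ¬ p n) r = r := by
  induction r with
  | zero => simp
  | succ r ih => grind

open Classical in
theorem birk_contraction (s : Seq3) (t : ℕ) :
    birk (contraction s) (Nat.count (fun n => s n ≠ 0) t) =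
      (incidence true).symm (birk s t) +
        ((height s t : ℝ) - Nat.count (IsUnmatched s) t) • ![0, 1, -1] := by
  have hzero : birk (contraction s) (Nat.count (fun n => s n ≠ 0) t) 0 = birk s t 1 := by
    simp only [birk_apply, contraction_eq_zero_iff]
    rw [count_comp_nth_count (p := fun n => s n = 1) (by simp +contextual)]
  have htwo : birk (contraction s) (Nat.count (fun n => s n ≠ 0) t) 2 =
      Nat.count (IsUnmatched s) t := by
    simp only [birk_apply, contraction_eq_two_iff]
    rw [count_comp_nth_count (p := IsUnmatched s) fun n hn => by simp [hn.apply_eq_two]]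
  have hmass := mass_birk (contraction s) (Nat.count (fun n => s n ≠ 0) t)
  have hmass' := mass_birk s t
  have hnonzero : (Nat.count (fun n => s n ≠ 0) t : ℝ) = t - birk s t 0 := by
    rw [birk_apply, eq_sub_iff_add_eq']
    exact_mod_cast count_add_count_not (fun n => s n = 0) t
  have hheight : (height s t : ℝ) = birk s t 2 - birk s t 0 := by
    simp [height, birk_apply]
  simp only [mass, Fin.sum_univ_three] at hmass hmass'
  rw [incidence_symm_true]
  ext i
  fin_cases i <;> simp <;> linarith

theorem infinite_setOf_ne_zero {v : Fin 3 → ℝ} (h : hasFreq s v) (hv : v 0 < v 2) :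
    {n | s n ≠ 0}.Infinite :=
  (infinite_of_tendsto_count ((h.nonneg 0).trans_lt hv) (h.tendsto_count 2)).mono fun n hn => by
    simp [Set.mem_ofPred_eq ▸ hn]

theorem hasFreq_contraction {v : Fin 3 → ℝ} (h : hasFreq s v) (hv : v 0 < v 2) :
    hasFreq (contraction s) (toSimplex ((incidence true).symm v)) := by
  classical
  have hinf := infinite_setOf_ne_zero h hv
  have hnth := (Nat.nth_strictMono hinf).tendsto_atTop
  have hmass : 0 < mass ((incidence true).symm v) := by
    have h₀ : 0 ≤ v 0 := h.nonneg 0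
    have h₁ : 0 ≤ v 1 := h.nonneg 1
    calc 0 < v 1 + v 0 + (v 2 - v 0) := by linarith
      _ = mass ((incidence true).symm v) := by
        rw [mass, Fin.sum_univ_three, incidence_symm_true]; rfl
  refine hasFreq_toSimplex_of_samples hnth hmass.ne' ?_
  have herror := ((tendsto_inv_mul_height h).sub
    (tendsto_inv_mul_count_isUnmatched h hv)).smul_const (![0, 1, -1] : Fin 3 → ℝ)
  rw [sub_self, zero_smul] at herror
  have hlim := (tendsto_incidence_symm true h).add herror
  rw [add_zero] at hlim
  refine (hlim.comp hnth).congr fun j => ?_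
  have hbirk := birk_contraction s (Nat.nth (fun n => s n ≠ 0) j)
  rw [Nat.count_nth_of_infinite hinf] at hbirk
  rw [hbirk, Function.comp_apply, map_smul, smul_add, smul_smul, mul_sub]

theorem IsFutureMin.contraction_block (ht : IsFutureMin s t) :
    let x := shift^[Nat.count (fun n => s n ≠ 0) t] (contraction s)
    let k := blockLen true (x 0)
    lexLe (inflate true x) (shift^[t] s) ∨ (inflate true x ∈ PiNat.cylinder (shift^[t] s) k ∧
      Nat.count (fun n => s n ≠ 0) (k + t) = Nat.count (fun n => s n ≠ 0) t + 1 ∧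
      IsFutureMin s (k + t)) := by
  classical
  intro x k
  have hx : x 0 = if s t = 1 then 0 else if IsUnmatched s t then 2 else 1 := by
    rw [← contraction_count ht.apply_ne_zero]
    exact iterate_shift_apply_zero _ _
  have hcount := Nat.count_succ (fun n => s n ≠ 0) t
  rw [if_pos ht.apply_ne_zero] at hcount
  by_cases hlong : x 0 = 1
  · have hs : s t = 2 := by grind [ht.apply_ne_zero]
    by_cases hs₁ : s (t + 1) = 0
    · have hk : k + t = t + 1 + 1 := by rw [show k = 2 from if_pos hlong, add_comm]
      rw [hk, Nat.count_succ, hcount, if_neg (not_not.2 hs₁)]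
      refine Or.inr ⟨fun i hi => ?_, rfl, ht.of_height_le (by omega) ?_⟩
      · obtain rfl | rfl : i = 0 ∨ i = 1 := by omega
        · rw [inflate_apply_zero, hlong, iterate_shift_apply_zero, hs]; rfl
        · rw [inflate_apply_one_of_eq hlong, iterate_shift_apply_one, hs₁]
      · rw [height_succ_of_eq_zero hs₁, height_succ_of_eq_two hs]; omega
    · exact Or.inl (inflate_lexLt_iterate_shift (Or.inl hlong) hs hs₁).lexLe
  · have hlead : leadDigit true (x 0) = s t := by
      rw [hx, leadDigit]; grind [IsUnmatched.apply_eq_two]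
    have hmin : IsFutureMin s (t + 1) := by
      by_cases hs : s t = 1
      · exact ht.of_height_le t.le_succ (height_succ_of_eq_one hs).le
      · exact IsUnmatched.isFutureMin_succ (by grind)
    rw [show k = 1 from if_neg hlong, add_comm 1 t]
    refine Or.inr ⟨fun i hi => ?_, hcount, hmin⟩
    rw [Nat.lt_one_iff.1 hi, inflate_apply_zero, hlead, iterate_shift_apply_zero]

theorem inflate_contraction_lexLe (ht : IsFutureMin s t) :
    lexLe (inflate true (shift^[Nat.count (fun n => s n ≠ 0) t] (contraction s)))
      (shift^[t] s) := by
  refine lexLe_of_bisimulation (fun a b => ∃ t, IsFutureMin s t ∧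
    a = inflate true (shift^[Nat.count (fun n => s n ≠ 0) t] (contraction s)) ∧
    b = shift^[t] s) ?_ ⟨t, ht, rfl, rfl⟩
  rintro _ _ ⟨t, ht, rfl, rfl⟩
  refine ht.contraction_block.imp_right fun ⟨hcyl, hcount, hmin⟩ =>
    ⟨_, one_le_blockLen _ _, hcyl, _, hmin, ?_, iterate_shift_iterate_shift _ _ _⟩
  rw [iterate_shift_blockLen_inflate, shift_iterate_shift, hcount]

theorem hasFreq.exists_inflate_true_lexDominated {v : Fin 3 → ℝ} (h : hasFreq s v)
    (hv : v 0 < v 2) :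
    ∃ x, hasFreq x (toSimplex ((incidence true).symm v)) ∧ LexDominated (inflate true x) s := by
  obtain ⟨p, hp⟩ := exists_isUnmatched h hv
  refine ⟨contraction s, hasFreq_contraction h hv, fun r => ?_⟩
  obtain ⟨j, hj⟩ := exists_iterate_shift_inflate_lexLe true (contraction s) r
  by_cases hunmatched : contraction s j = 2
  · have hle := inflate_contraction_lexLe (contraction_eq_two_iff.1 hunmatched).isFutureMin
    rw [Nat.count_nth_of_infinite (infinite_setOf_ne_zero h hv)] at hle
    exact ⟨_, hj.trans hle⟩
  · have hdigit : ∀ c, c ≠ 2 → c = longDigit true ∨ leadDigit true c < 2 := by decide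
    refine ⟨p, hj.trans (inflate_lexLt_iterate_shift (hdigit _ ?_) hp.apply_eq_two
      hp.apply_succ_ne_zero).lexLe⟩
    rwa [iterate_shift_apply_zero]

end BracketMatching

/-! ### Renormalization of digit frequencies -/

/-- The index of the substitution whose incidence matrix can be divided out of a nonnegative `V`
with nonnegative quotient. -/
noncomputable def branch (V : Fin 3 → ℝ) : Bool := decide (V 0 < V 2)

/-- One step of the multidimensional continued fraction algorithm. Vectors are not normalized, so
that the algorithm is subtractive; only the ray through `V` matters. -/
noncomputable def renorm (V : Fin 3 → ℝ) : Fin 3 → ℝ := (incidence (branch V)).symm V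

/-- The sequence of substitutions recorded by the continued fraction algorithm. -/
noncomputable def itinerary (V : Fin 3 → ℝ) (k : ℕ) : Bool := branch (renorm^[k] V)

theorem branch_eq_true {V : Fin 3 → ℝ} : branch V = true ↔ V 0 < V 2 := by
  simp [branch]

theorem branch_eq_false {V : Fin 3 → ℝ} : branch V = false ↔ V 2 ≤ V 0 := by
  simp [branch]

theorem incidence_renorm (V : Fin 3 → ℝ) : incidence (branch V) (renorm V) = V :=
  (incidence _).apply_symm_apply V

theorem renorm_of_branch_true {V : Fin 3 → ℝ} (h : branch V = true) :
    renorm V = ![V 1, V 0, V 2 - V 0] := by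
  rw [renorm, h, incidence_symm_true]

theorem renorm_of_branch_false {V : Fin 3 → ℝ} (h : branch V = false) :
    renorm V = ![V 0 - V 2, V 1, V 2] := by
  rw [renorm, h, incidence_symm_false]

theorem renorm_pos {V : Fin 3 → ℝ} (hV : 0 < V) : 0 < renorm V := by
  have hnonneg : 0 ≤ renorm V := fun i => by
    have h₀ : 0 ≤ V 0 := hV.le 0
    have h₁ : 0 ≤ V 1 := hV.le 1
    have h₂ : 0 ≤ V 2 := hV.le 2
    cases h : branch V
    · rw [renorm_of_branch_false h]
      fin_cases i <;> simp [h₁, h₂, branch_eq_false.1 h]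
    · rw [renorm_of_branch_true h]
      fin_cases i <;> simp [h₀, h₁, (branch_eq_true.1 h).le]
  exact hnonneg.lt_of_ne' ((incidence _).symm.map_ne_zero_iff.2 hV.ne')

theorem iterate_renorm_pos {V : Fin 3 → ℝ} (hV : 0 < V) (k : ℕ) : 0 < renorm^[k] V := by
  induction k generalizing V with
  | zero => exact hV
  | succ _ ih => exact ih (renorm_pos hV)

theorem renorm_apply_two_pos {V : Fin 3 → ℝ} (h₂ : 0 < V 2) : 0 < renorm V 2 := by
  cases h : branch V
  · simpa [renorm_of_branch_false h] using h₂
  · simpa [renorm_of_branch_true h] using branch_eq_true.1 h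

theorem iterate_renorm_apply_two_pos {V : Fin 3 → ℝ} (h₂ : 0 < V 2) (k : ℕ) :
    0 < (renorm^[k] V) 2 := by
  induction k generalizing V with
  | zero => exact h₂
  | succ _ ih => exact ih (renorm_apply_two_pos h₂)

theorem hasFreq.exists_inflate_branch_lexDominated {s : Seq3} {V : Fin 3 → ℝ} (hV : 0 < V)
    (h : hasFreq s (toSimplex V)) :
    ∃ x, hasFreq x (toSimplex (renorm V)) ∧ LexDominated (inflate (branch V) x) s := by
  have hc : 0 < (mass V)⁻¹ := inv_pos.2 (mass_pos hV)
  have hsymm : (incidence (branch V)).symm (toSimplex V) = (mass V)⁻¹ • renorm V :=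
    map_smul _ _ _
  rw [← toSimplex_smul hc.ne', ← hsymm]
  cases hb : branch V
  · refine h.exists_inflate_false_lexDominated ?_
    rw [← hb, hsymm]
    exact smul_pos hc (renorm_pos hV)
  · exact h.exists_inflate_true_lexDominated (mul_lt_mul_of_pos_left (branch_eq_true.1 hb) hc)

theorem hasFreq.exists_iterInflate_lexDominated {s : Seq3} {V : Fin 3 → ℝ} (hV : 0 < V)
    (h : hasFreq s (toSimplex V)) (k : ℕ) :
    ∃ x, hasFreq x (toSimplex (renorm^[k] V)) ∧
      LexDominated (iterInflate (itinerary V) k x) s := by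
  induction k with
  | zero => exact ⟨s, h, .refl s⟩
  | succ k ih =>
    obtain ⟨x, hx, hxs⟩ := ih
    obtain ⟨y, hy, hyx⟩ := hx.exists_inflate_branch_lexDominated (iterate_renorm_pos hV k)
    exact ⟨y, by rwa [Function.iterate_succ_apply'], (hyx.iterInflate _ k).trans hxs⟩

theorem BoundedDeviation.iterInflate {x : Seq3} {V : Fin 3 → ℝ} (hV : 0 < V) {k : ℕ}
    (h : BoundedDeviation x (toSimplex (renorm^[k] V))) :
    BoundedDeviation (iterInflate (itinerary V) k x) (toSimplex V) := by
  induction k generalizing x with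
  | zero => exact h
  | succ k ih =>
    rw [Function.iterate_succ_apply'] at h
    have hdev := h.inflate (b := itinerary V k) (renorm_pos (iterate_renorm_pos hV k))
    rw [itinerary, incidence_renorm] at hdev
    exact ih hdev

/-! ### Constant tails of itineraries -/

theorem nonpos_of_forall_natCast_mul_le {a b : ℝ} (h : ∀ n : ℕ, n * a ≤ b) : a ≤ 0 := by
  by_contra! ha
  obtain ⟨n, hn⟩ := exists_nat_gt (b / a)
  exact (h n).not_gt ((div_lt_iff₀ ha).1 hn)

theorem natCast_mul_apply_two_le_of_itinerary_false {V : Fin 3 → ℝ} (hV : 0 < V)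
    (h : ∀ k, itinerary V k = false) (n : ℕ) : n * V 2 ≤ V 0 := by
  induction n generalizing V with
  | zero => simpa using hV.le 0
  | succ n ih =>
    have hstep := ih (renorm_pos hV) fun k => h (k + 1)
    rw [renorm_of_branch_false (V := V) (h 0)] at hstep
    simp only [Matrix.cons_val] at hstep
    push_cast
    linarith

theorem exists_itinerary_eq_true {V : Fin 3 → ℝ} (hV : 0 < V) (h₂ : 0 < V 2) :
    ∃ k, itinerary V k = true := by
  by_contra! h
  simp only [Bool.not_eq_true] at h
  exact (nonpos_of_forall_natCast_mul_le
    (natCast_mul_apply_two_le_of_itinerary_false hV h)).not_gt h₂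

theorem itinerary_eq_false_of_apply_two_eq_zero {V : Fin 3 → ℝ} (hV : 0 < V) (h₂ : V 2 = 0)
    (k : ℕ) : itinerary V k = false := by
  have hbranch {V : Fin 3 → ℝ} (hV : 0 < V) (h₂ : V 2 = 0) : branch V = false :=
    branch_eq_false.2 (h₂.le.trans (hV.le 0))
  induction k generalizing V with
  | zero => exact hbranch hV h₂
  | succ _ ih =>
    exact ih (renorm_pos hV) (by simpa [renorm_of_branch_false (hbranch hV h₂)] using h₂)

theorem natCast_mul_add_le_of_itinerary_true {V : Fin 3 → ℝ} (hV : 0 < V)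
    (h : ∀ k, itinerary V k = true) (n : ℕ) : n * (V 0 + V 1) ≤ V 2 := by
  induction n generalizing V with
  | zero => simpa using hV.le 2
  | succ n ih =>
    have hstep := ih (renorm_pos (renorm_pos hV)) fun k => h (k + 2)
    rw [renorm_of_branch_true (V := renorm V) (h 1), renorm_of_branch_true (V := V) (h 0)] at hstep
    simp only [Matrix.cons_val] at hstep
    push_cast
    linarith

theorem apply_eq_zero_of_itinerary_true {V : Fin 3 → ℝ} (hV : 0 < V)
    (h : ∀ k, itinerary V k = true) : V 0 = 0 ∧ V 1 = 0 :=
  (add_eq_zero_iff_of_nonneg (hV.le 0) (hV.le 1)).1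
    ((nonpos_of_forall_natCast_mul_le (natCast_mul_add_le_of_itinerary_true hV h)).antisymm
      (add_nonneg (hV.le 0) (hV.le 1)))

theorem renorm_mem_of_forall_mem {A : AddSubgroup ℝ} {V : Fin 3 → ℝ} (h : ∀ i, V i ∈ A)
    (i : Fin 3) : renorm V i ∈ A := by
  cases hb : branch V
  · rw [renorm_of_branch_false hb]
    fin_cases i <;> simp [h, A.sub_mem]
  · rw [renorm_of_branch_true hb]
    fin_cases i <;> simp [h, A.sub_mem]

theorem iterate_renorm_mem_of_forall_mem {A : AddSubgroup ℝ} {V : Fin 3 → ℝ} (h : ∀ i, V i ∈ A)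
    (k : ℕ) (i : Fin 3) : (renorm^[k] V) i ∈ A := by
  induction k generalizing V with
  | zero => exact h i
  | succ _ ih => exact ih (renorm_mem_of_forall_mem h)

theorem IsRat.exists_forall_mem_zmultiples {v : Fin 3 → ℝ} (h : IsRat v) :
    ∃ c > 0, ∀ i, v i ∈ AddSubgroup.zmultiples c := by
  choose q hq using h
  refine ⟨(∏ i, ((q i).den : ℝ))⁻¹, by positivity, fun i => ?_⟩
  refine AddSubgroup.mem_zmultiples_iff.2
    ⟨(q i).num * ∏ j ∈ Finset.univ.erase i, ((q j).den : ℤ), ?_⟩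
  rw [hq, ← Finset.mul_prod_erase _ _ (Finset.mem_univ i), Rat.cast_def, zsmul_eq_mul]
  have hne : ∏ j ∈ Finset.univ.erase i, ((q j).den : ℝ) ≠ 0 := by positivity
  push_cast
  field_simp

theorem le_of_mem_zmultiples_of_pos {a c : ℝ} (hc : 0 < c) (ha : a ∈ AddSubgroup.zmultiples c)
    (hpos : 0 < a) : c ≤ a := by
  obtain ⟨n, rfl⟩ := AddSubgroup.mem_zmultiples_iff.1 ha
  rw [zsmul_eq_mul] at hpos ⊢
  have hn : 0 < n := Int.cast_pos.1 ((mul_pos_iff_of_pos_right hc).1 hpos)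
  exact le_mul_of_one_le_left hc.le (by exact_mod_cast hn)

theorem mass_iterate_renorm_add_le {V : Fin 3 → ℝ} {c : ℝ} (hV : 0 < V)
    (hc : ∀ k, c ≤ (renorm^[k] V) 2) (k : ℕ) :
    mass (renorm^[k] V) + c * Nat.count (fun j => itinerary V j = false) k ≤ mass V := by
  induction k with
  | zero => simp
  | succ k ih =>
    refine le_trans ?_ ih
    have h₀ : 0 ≤ (renorm^[k] V) 0 := (iterate_renorm_pos hV k).le 0
    rw [Function.iterate_succ_apply', Nat.count_succ]
    cases hb : itinerary V k
    · rw [renorm_of_branch_false hb]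
      simp only [mass, Fin.sum_univ_three, Matrix.cons_val, if_true]
      push_cast
      linarith [hc k]
    · rw [renorm_of_branch_true hb]
      simp only [mass, Fin.sum_univ_three, Matrix.cons_val, Bool.true_eq_false, if_false, add_zero]
      linarith

theorem IsRat.eventually_itinerary_eq_true {v : Fin 3 → ℝ} (h : IsRat v) (hv : 0 < v)
    (h₂ : 0 < v 2) : ∀ᶠ k in atTop, itinerary v k = true := by
  obtain ⟨c, hc, hmem⟩ := h.exists_forall_mem_zmultiples
  have hle (k : ℕ) : c ≤ (renorm^[k] v) 2 :=
    le_of_mem_zmultiples_of_pos hc (iterate_renorm_mem_of_forall_mem hmem k 2)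
      (iterate_renorm_apply_two_pos h₂ k)
  by_contra hnot
  have hfreq : ∃ᶠ k in atTop, itinerary v k = false := by
    simpa only [not_eventually, Bool.not_eq_true] using hnot
  have hinf : {k | itinerary v k = false}.Infinite := Nat.frequently_atTop_iff_infinite.1 hfreq
  refine hc.not_ge (nonpos_of_forall_natCast_mul_le (b := mass v) fun n => ?_)
  have hbound := mass_iterate_renorm_add_le hv hle (Nat.nth (fun k => itinerary v k = false) n)
  rw [Nat.count_nth_of_infinite hinf] at hbound
  linarith [mass_pos (iterate_renorm_pos hv (Nat.nth (fun k => itinerary v k = false) n))]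

/-! ### Infimax sequences -/

/-- The sequence `2000…`, the least one that begins with `2`. -/
def twoZeros : Seq3 := fun n => if n = 0 then 2 else 0

theorem twoZeros_lexLe {x : Seq3} (hx : x 0 = 2) : lexLe twoZeros x := by
  refine not_lexLt.1 fun ⟨n, _, hlt⟩ => ?_
  rcases eq_or_ne n 0 with rfl | hn
  · rw [hx] at hlt
    exact lt_irrefl _ hlt
  · rw [twoZeros, if_neg hn] at hlt
    exact Fin.not_lt_zero _ hlt

theorem twoZeros_mem_maxSet : twoZeros ∈ MaxSet := by
  refine ⟨rfl, fun r => ?_⟩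
  rcases eq_or_ne r 0 with rfl | hr
  · exact lexLe.refl _
  · refine (lexLt_of_head_lt ?_).lexLe
    rw [iterate_shift_apply_zero, twoZeros, if_neg hr]
    decide

theorem lexDominated_iterate_shift (x : Seq3) (p : ℕ) : LexDominated (shift^[p] x) x := fun r =>
  ⟨r + p, by rw [iterate_shift_iterate_shift]; exact lexLe.refl _⟩

theorem lexLe_of_iterInflate_lexDominated {b : ℕ → Bool} {k : ℕ} {x s w : Seq3}
    (h : LexDominated (iterInflate b k x) s) (hs : s ∈ BetaShift w) (p : ℕ) :
    lexLe (iterInflate b k (shift^[p] x)) w :=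
  (((lexDominated_iterate_shift x p).iterInflate b k).trans h).mem_betaShift hs 0

theorem iterInflate_twoZeros_lexLe {v : Fin 3 → ℝ} {w : Seq3} (hv : v ∈ DF w) (h₂ : 0 < v 2)
    (k : ℕ) : lexLe (iterInflate (itinerary v) k twoZeros) w := by
  obtain ⟨s, hs, hfreq⟩ := hv
  have hpos := pos_of_nonneg_of_mass_eq_one hfreq.nonneg hfreq.mass_eq_one
  rw [← toSimplex_of_mass_eq_one hfreq.mass_eq_one] at hfreq
  obtain ⟨x, hx, hdom⟩ := hfreq.exists_iterInflate_lexDominated hpos k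
  have hx₂ : 0 < toSimplex (renorm^[k] v) 2 :=
    mul_pos (inv_pos.2 (mass_pos (iterate_renorm_pos hpos k))) (iterate_renorm_apply_two_pos h₂ k)
  obtain ⟨p, hp⟩ := (infinite_of_tendsto_count hx₂ (hx.tendsto_count 2)).nonempty
  refine .trans (iterInflate_lexLe_iterInflate_iff.2 (twoZeros_lexLe ?_))
    (lexLe_of_iterInflate_lexDominated hdom hs p)
  rw [iterate_shift_apply_zero]
  exact hp

theorem exists_iterInflate_mem_maxSet {v : Fin 3 → ℝ} (h₀ : 0 ≤ v) (h₁ : mass v = 1) (k : ℕ) :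
    ∃ m, iterInflate (itinerary v) k m ∈ MaxSet ∧ hasFreq (iterInflate (itinerary v) k m) v := by
  have hpos := pos_of_nonneg_of_mass_eq_one h₀ h₁
  have hposk := iterate_renorm_pos hpos k
  obtain ⟨m, hm, hdev⟩ :=
    exists_mem_maxSet_boundedDeviation (toSimplex_nonneg hposk) (mass_toSimplex hposk)
  refine ⟨m, iterInflate_mem_maxSet _ k hm, ?_⟩
  simpa only [toSimplex_of_mass_eq_one h₁] using (hdev.iterInflate hpos).hasFreq

theorem lexLe_iterInflate_allTwos {v : Fin 3 → ℝ} {y : Seq3} (h₀ : 0 ≤ v) (h₁ : mass v = 1)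
    (hy : ∀ w, w ∈ MaxSet ∧ hasFreq w v → lexLe y w) (k : ℕ) :
    lexLe y (iterInflate (itinerary v) k allTwos) := by
  obtain ⟨m, hm⟩ := exists_iterInflate_mem_maxSet h₀ h₁ k
  exact (hy _ hm).trans (iterInflate_lexLe_iterInflate_iff.2 (lexLe_allTwos m))

theorem isInfimax_of_forall_between {v : Fin 3 → ℝ} {I : Seq3} (h₀ : 0 ≤ v) (h₁ : mass v = 1)
    (h₂ : 0 < v 2) (hb : ∃ᶠ k in atTop, itinerary v k = false) (hI : I ∈ MaxSet)
    (hlow : ∀ k, lexLe (iterInflate (itinerary v) k twoZeros) I)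
    (hup : ∀ k, lexLe I (iterInflate (itinerary v) k allTwos)) : IsInfimax v I := by
  have hclose (n : ℕ) : ∃ k, iterInflate (itinerary v) k twoZeros ∈ PiNat.cylinder I n ∧
      iterInflate (itinerary v) k allTwos ∈ PiNat.cylinder I n := by
    obtain ⟨k, hk⟩ := exists_iterInflate_mem_cylinder hb (x := allTwos) (y := twoZeros) rfl rfl n
    have hIk := mem_cylinder_of_lexLe_of_lexLe hk (hlow k) (hup k)
    rw [PiNat.mem_cylinder_comm] at hIk
    exact ⟨k, hIk, fun i hi => (hk i hi).trans (hIk i hi)⟩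
  obtain ⟨m, hm⟩ := exists_iterInflate_mem_maxSet h₀ h₁ 0
  refine ⟨⟨_, hm⟩, hI, fun w hw => lexLe_of_forall_cylinder fun n => ?_,
    fun y hy => lexLe_of_forall_cylinder fun n => ?_⟩
  · obtain ⟨k, hk, -⟩ := hclose n
    exact ⟨_, hk, w, PiNat.self_mem_cylinder w n,
      iterInflate_twoZeros_lexLe ⟨w, mem_betaShift_of_mem_maxSet hw.1 (lexLe.refl w), hw.2⟩ h₂ k⟩
  · obtain ⟨k, -, hk⟩ := hclose n
    exact ⟨y, PiNat.self_mem_cylinder y n, _, hk, lexLe_iterInflate_allTwos h₀ h₁ hy k⟩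

theorem IsInfimax.iterInflate_twoZeros_lexLe {α : Fin 3 → ℝ} {I : Seq3} (h : IsInfimax α I)
    (h₂ : 0 < α 2) (k : ℕ) : lexLe (iterInflate (itinerary α) k twoZeros) I :=
  h.2.2.2 _ fun w hw =>
    _root_.iterInflate_twoZeros_lexLe
      ⟨w, mem_betaShift_of_mem_maxSet hw.1 (lexLe.refl w), hw.2⟩ h₂ k

theorem IsInfimax.lexLe_iterInflate_allTwos {α : Fin 3 → ℝ} {I : Seq3} (h : IsInfimax α I)
    (k : ℕ) : lexLe I (iterInflate (itinerary α) k allTwos) := by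
  obtain ⟨w, -, hfreq⟩ := h.1
  exact _root_.lexLe_iterInflate_allTwos hfreq.nonneg hfreq.mass_eq_one h.2.2.1 k

/-! ### Comparison of itineraries -/

theorem apply_two_le_apply_zero_of_forall_lexLe {x : Seq3} {v : Fin 3 → ℝ} (h : hasFreq x v)
    (hx : ∀ p, lexLe (shift^[p] x) (inflate false allTwos)) : v 2 ≤ v 0 := by
  by_contra! hv
  obtain ⟨p, hp⟩ := exists_isUnmatched h hv
  refine (hx p).not_lexLt (lexLt_of_lt_at_one ?_ ?_)
  · rw [iterate_shift_apply_zero, hp.apply_eq_two]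
    exact leadDigit_two false
  · rw [inflate_apply_one_of_eq rfl, iterate_shift_apply_one]
    exact Fin.pos_of_ne_zero hp.apply_succ_ne_zero

theorem exists_boundedDeviation_of_itinerary_lt {b : ℕ → Bool} {I : Seq3} {v : Fin 3 → ℝ}
    {k : ℕ} (h₀ : 0 ≤ v) (h₁ : mass v = 1)
    (hlow : lexLe (iterInflate b (k + 1) twoZeros) I) (hagree : ∀ j < k, b j = itinerary v j)
    (hb : b k = true) (hv : itinerary v k = false) :
    ∃ g ∈ BetaShift I, BoundedDeviation g v := by
  have hpos := pos_of_nonneg_of_mass_eq_one h₀ h₁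
  have hposk := iterate_renorm_pos hpos (k + 1)
  have hdev := (boundedDeviation_greedySeq (toSimplex_nonneg hposk)
    (mass_toSimplex hposk)).iterInflate hpos
  rw [toSimplex_of_mass_eq_one h₁] at hdev
  refine ⟨_, LexDominated.mem_betaShift ?_
    (mem_betaShift_of_mem_maxSet (iterInflate_mem_maxSet b (k + 1) twoZeros_mem_maxSet) hlow), hdev⟩
  rw [iterInflate, iterInflate, hb, hv, ← iterInflate_congr hagree]
  refine LexDominated.iterInflate b k (lexDominated_inflate_false (p := 0) ?_ ?_)
  · rw [inflate_apply_zero]; rfl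
  · rw [inflate_apply_one_of_ne (by decide)]; decide

theorem itinerary_eq_false_of_mem_DF {b : ℕ → Bool} {I : Seq3} {v : Fin 3 → ℝ} {k : ℕ}
    (hv : v ∈ DF I) (hup : lexLe I (iterInflate b (k + 1) allTwos))
    (hagree : ∀ j < k, b j = itinerary v j) (hb : b k = false) : itinerary v k = false := by
  obtain ⟨s, hs, hfreq⟩ := hv
  have hpos := pos_of_nonneg_of_mass_eq_one hfreq.nonneg hfreq.mass_eq_one
  rw [← toSimplex_of_mass_eq_one hfreq.mass_eq_one] at hfreq
  obtain ⟨x, hx, hdom⟩ := hfreq.exists_iterInflate_lexDominated hpos k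
  rw [iterInflate, hb, iterInflate_congr hagree] at hup
  have hle := apply_two_le_apply_zero_of_forall_lexLe hx fun p =>
    iterInflate_lexLe_iterInflate_iff.1 ((lexLe_of_iterInflate_lexDominated hdom hs p).trans hup)
  exact branch_eq_false.2 (le_of_mul_le_mul_left hle
    (inv_pos.2 (mass_pos (iterate_renorm_pos hpos k))))

theorem iterInflate_allTwos_lexLe {b : ℕ → Bool} {I : Seq3} {K : ℕ} (hb : ∀ k ≥ K, b k = true)
    (hlow : ∀ k, lexLe (iterInflate b k twoZeros) I) : lexLe (iterInflate b K allTwos) I := by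
  refine lexLe_of_forall_cylinder fun n =>
    ⟨_, ?_, I, PiNat.self_mem_cylinder I n, hlow (K + 2 * (n + 1))⟩
  rw [iterInflate_add hb]
  have hx := iterate_inflate_true_mem_cylinder_allTwos twoZeros (n + 1)
  exact PiNat.cylinder_anti _ (by omega)
    (iterInflate_mem_cylinder b K (hx 0 n.succ_pos) hx)

theorem exists_boundedDeviation_of_itinerary_eventually_true {I : Seq3} {v : Fin 3 → ℝ} {K : ℕ}
    (h₀ : 0 ≤ v) (h₁ : mass v = 1)
    (hlow : ∀ k, lexLe (iterInflate (itinerary v) k twoZeros) I)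
    (hK : ∀ k ≥ K, itinerary v k = true) : ∃ g ∈ BetaShift I, BoundedDeviation g v := by
  have hpos := pos_of_nonneg_of_mass_eq_one h₀ h₁
  have hposK := iterate_renorm_pos hpos K
  obtain ⟨hzero, hone⟩ := apply_eq_zero_of_itinerary_true hposK fun k => by
    rw [itinerary, ← Function.iterate_add_apply]
    exact hK (k + K) (Nat.le_add_left K k)
  have hdev : BoundedDeviation allTwos (toSimplex (renorm^[K] v)) :=
    boundedDeviation_allTwos (by simp [toSimplex, hzero]) (by simp [toSimplex, hone])
      (mass_toSimplex hposK)
  refine ⟨_, mem_betaShift_of_mem_maxSet (iterInflate_mem_maxSet _ K allTwos_mem_maxSet)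
    (iterInflate_allTwos_lexLe hK hlow), ?_⟩
  simpa only [toSimplex_of_mass_eq_one h₁] using hdev.iterInflate hpos

theorem apply_two_pos_of_itinerary_eq {α v : Fin 3 → ℝ} (hα : 0 < α) (hα₂ : 0 < α 2) (hv : 0 < v)
    (h : itinerary α = itinerary v) : 0 < v 2 := by
  refine (hv.le 2).lt_of_ne' fun hv₂ => ?_
  obtain ⟨k, hk⟩ := exists_itinerary_eq_true hα hα₂
  rw [h, itinerary_eq_false_of_apply_two_eq_zero hv hv₂] at hk
  exact Bool.false_ne_true hk

theorem exists_boundedDeviation_of_itinerary_ne {b : ℕ → Bool} {I : Seq3} {v : Fin 3 → ℝ}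
    (hlow : ∀ k, lexLe (iterInflate b k twoZeros) I)
    (hup : ∀ k, lexLe I (iterInflate b k allTwos)) (hv : v ∈ DF I) (hne : b ≠ itinerary v) :
    ∃ g ∈ BetaShift I, BoundedDeviation g v := by
  have hagree : ∀ j < PiNat.firstDiff b (itinerary v), b j = itinerary v j := fun _ =>
    PiNat.apply_eq_of_lt_firstDiff
  have hdiff := PiNat.apply_firstDiff_ne hne
  have ⟨s, _, hfreq⟩ := hv
  cases hb : b (PiNat.firstDiff b (itinerary v))
  · exact absurd (hb.trans (itinerary_eq_false_of_mem_DF hv (hup _) hagree hb).symm) hdiff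
  · exact exists_boundedDeviation_of_itinerary_lt hfreq.nonneg hfreq.mass_eq_one (hlow _) hagree
      hb (by simpa [hb] using hdiff.symm)

/-- Let `α ∈ Δ'` and `v ∈ DF(I(α))`. If it is not the case that `v` is
irrational with `v₂ > 0` and `I(v) = I(α)`, then `v` is represented by a `v`-goober in
`B(I(α))`: a minimal set `Y ⊆ B(I(α))` with bounded deviation from `v`; in particular
every point of `Y` has digit frequency `v`. -/
theorem stmt19 (α : Fin 3 → ℝ) (hα : α ∈ Delta') (Iα : Seq3) (hI : IsInfimax α Iα)
    (v : Fin 3 → ℝ) (hv : v ∈ DF Iα)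
    (hnot : ¬ (¬ IsRat v ∧ 0 < v 2 ∧ IsInfimax v Iα)) :
    ∃ Y : Set Seq3, IsMinimalSet shift Y ∧ Y ⊆ BetaShift Iα ∧
      (∃ M : ℝ, 0 < M ∧ ∀ s ∈ Y, ∀ r : ℕ, ‖birk s r - (r : ℝ) • v‖ < M) ∧
      ∀ s ∈ Y, hasFreq s v := by
  have hlow := hI.iterInflate_twoZeros_lexLe hα.2
  have hup := hI.lexLe_iterInflate_allTwos
  suffices ∃ g ∈ BetaShift Iα, BoundedDeviation g v by
    obtain ⟨g, hg, hdev⟩ := this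
    exact hdev.exists_isMinimalSet hg
  by_cases hit : itinerary α = itinerary v
  · obtain ⟨s, -, hfreq⟩ := hv
    have h₀ := hfreq.nonneg
    have h₁ := hfreq.mass_eq_one
    have hpos := pos_of_nonneg_of_mass_eq_one h₀ h₁
    have h₂ := apply_two_pos_of_itinerary_eq (Pi.lt_def.2 ⟨hα.1.1, 2, hα.2⟩) hα.2 hpos hit
    rw [hit] at hlow hup
    have htrue : ∀ᶠ k in atTop, itinerary v k = true := by
      by_contra hnt
      have hfalse : ∃ᶠ k in atTop, itinerary v k = false := by
        simpa only [not_eventually, Bool.not_eq_true] using hnt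
      exact hnot ⟨fun hrat => hnt (hrat.eventually_itinerary_eq_true hpos h₂), h₂,
        isInfimax_of_forall_between h₀ h₁ h₂ hfalse hI.2.1 hlow hup⟩
    obtain ⟨K, hK⟩ := eventually_atTop.1 htrue
    exact exists_boundedDeviation_of_itinerary_eventually_true h₀ h₁ hlow hK
  · exact exists_boundedDeviation_of_itinerary_ne hlow hup hv hit
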